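/- arXiv:math/0306219 — 2 statements merged into one kernel-verified Lean document; each statement's English description precedes it below -/
import Mathlib

section
/- Suppose [·] is quasi-periodic with respect to ω ∈ ℂ in the sense that [x + ω] = e^{ξx + η}·[x] for all x ∈ ℂ, for some constants ξ, η ∈ ℂ. For μ ∈ ℕ^m let T_μ(a; x | s; u; v) denote the μ-th summand of the series E^{m,n}(a; x | s; u; v). Then for any l ∈ ℤ^m and p, q ∈ ℤ^n with l_1 + ⋯ + l_m + p_1 + ⋯ + p_n + q_1 + ⋯ + q_n = 0, and any generic parameters (all brackets appearing in denominators of the summands nonzero), one has T_μ(a + lω; x | s; u + pω; v + qω) = T_μ(a; x | s; u; v) for every μ ∈ ℕ^m; consequently E^{m,n}(a + lω; x | s; u + pω; v + qω) = E^{m,n}(a; x | s; u; v). -/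
/-!
Oddness of the bracket forces `exp (2η - ξω) = 1`, so iterating the quasi-periodicity gives
`[t + kω] = exp (kξt) · c k · [t]` for all `k ∈ ℤ`, where `c k ≠ 0` and `c (-k) = c k`
(`exists_multiplier`).

The factors of `T_μ` that involve one given parameter (`a_j`, `u_k` or `v_k`) are, up to
inversion, of the form `∏_i [y_i]_{μ_i} / [z]_{|μ|}`, where the parameter enters `y_i` and `z`
with opposite signs and `y_i + z = x_i + δ + s`. Shifting the parameter by `kω` produces
`c k ^ |μ|` in both numerator and denominator, which cancel, and an exponential
`exp (k C)` with `C` depending only on `μ`, `x`, `s`, `δ`, `ξ` (`block_shift`). The total factor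
acquired by `T_μ` is therefore `exp ((Σ l + Σ p + Σ q) C) = 1`.
-/

open Finset

/-- Shifted factorial `[x]_k = [x][x+δ]⋯[x+(k-1)δ]` with respect to the bracket `f`. -/
noncomputable def sf (f : ℂ → ℂ) (δ : ℂ) (x : ℂ) (k : ℕ) : ℂ :=
  ∏ i ∈ Finset.range k, f (x + (i : ℂ) * δ)

/-- Difference product `Δ(x) = ∏_{i<j} [x_i - x_j]`. -/
noncomputable def Del (f : ℂ → ℂ) {m : ℕ} (x : Fin m → ℂ) : ℂ :=
  ∏ i : Fin m, ∏ j ∈ Finset.univ.filter (fun j => i < j), f (x i - x j)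

/-- The multiple hypergeometric series `Φ^{m,n}_N(a; x | b; c)`. -/
noncomputable def Phi (f : ℂ → ℂ) (δ : ℂ) {m n : ℕ} (a x : Fin m → ℂ)
    (b c : Fin n → ℂ) (N : ℕ) : ℂ :=
  ∑ μ ∈ Finset.Nat.antidiagonalTuple m N,
    (Del f (fun i => x i + (μ i : ℂ) * δ) / Del f x)
      * (∏ i, ∏ j, sf f δ (x i - x j + a j) (μ i) / sf f δ (x i - x j + δ) (μ i))
      * (∏ i, ∏ k, sf f δ (x i + b k) (μ i) / sf f δ (x i + c k) (μ i))

/-- The `μ`-th summand of the very well-poised series `E^{m,n}(a; x | s; u; v)`. -/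
noncomputable def Eterm (f : ℂ → ℂ) (δ : ℂ) {m n : ℕ} (a x : Fin m → ℂ) (s : ℂ)
    (u v : Fin n → ℂ) (μ : Fin m → ℕ) : ℂ :=
  (Del f (fun i => x i + (μ i : ℂ) * δ) / Del f x)
    * (∏ i, f (x i + s + (((∑ j, μ j) + μ i : ℕ) : ℂ) * δ) / f (x i + s))
    * (∏ j, (sf f δ (s + x j) (∑ i, μ i) / sf f δ (δ + s + x j - a j) (∑ i, μ i))
        * ∏ i, sf f δ (x i - x j + a j) (μ i) / sf f δ (x i - x j + δ) (μ i))
    * (∏ k, (sf f δ (v k) (∑ i, μ i) / sf f δ (δ + s - u k) (∑ i, μ i))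
        * ∏ i, sf f δ (x i + u k) (μ i) / sf f δ (x i + δ + s - v k) (μ i))

/-- The very well-poised multiple series `E^{m,n}(a; x | s; u; v)`. -/
noncomputable def Evw (f : ℂ → ℂ) (δ : ℂ) {m n : ℕ} (a x : Fin m → ℂ) (s : ℂ)
    (u v : Fin n → ℂ) : ℂ :=
  ∑' μ : Fin m → ℕ, Eterm f δ a x s u v μ

/-- The one-dimensional very well-poised series `_{r+3}E_{r+2}(s; u_1, …, u_r)`. -/
noncomputable def E1 (f : ℂ → ℂ) (δ : ℂ) {r : ℕ} (s : ℂ) (u : Fin r → ℂ) : ℂ :=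
  ∑' k : ℕ, (f (s + 2 * (k : ℂ) * δ) / f s) * (sf f δ s k / sf f δ δ k)
    * ∏ i, sf f δ (u i) k / sf f δ (δ + s - u i) k

/-- Iterated quasi-periodicity. The evenness of the constant `c` is where oddness of `f` enters:
comparing `f (-t)` with `f (-t - ω)` yields `exp (2η - ξω) = 1`. -/
lemma exists_multiplier (f : ℂ → ℂ) (hf : f ≠ 0) (hodd : ∀ t : ℂ, f (-t) = -f t) (ω ξ η : ℂ)
    (hω : ∀ t : ℂ, f (t + ω) = Complex.exp (ξ * t + η) * f t) :
    ∃ c : ℤ → ℂ, (∀ k, c k ≠ 0) ∧ (∀ k, c (-k) = c k) ∧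
      ∀ (k : ℤ) (t : ℂ), f (t + k * ω) = Complex.exp (k * (ξ * t)) * c k * f t := by
  have h1 : Complex.exp (2 * η - ξ * ω) = 1 := by
    obtain ⟨t, ht⟩ := Function.ne_iff.mp hf
    have e1 := hω (-t - ω)
    rw [show -t - ω + ω = -t by ring, show -t - ω = -(t + ω) by ring, hodd, hodd, hω] at e1
    have e2 : Complex.exp (2 * η - ξ * ω)
        = Complex.exp (ξ * -(t + ω) + η) * Complex.exp (ξ * t + η) := by
      rw [← Complex.exp_add]; congr 1; ring
    apply mul_right_cancel₀ ht
    rw [e2]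
    linear_combination e1
  refine ⟨fun k => Complex.exp (k * (η - ξ * ω / 2) + ξ * ω / 2 * k ^ 2),
    fun k => Complex.exp_ne_zero _, fun k => ?_, fun k => ?_⟩
  · have h2 : Complex.exp ((k : ℂ) * (2 * η - ξ * ω)) = 1 := by
      rw [Complex.exp_int_mul, h1, one_zpow]
    beta_reduce
    rw [← mul_one (Complex.exp (((-k : ℤ) : ℂ) * _ + _)), ← h2, ← Complex.exp_add]
    congr 1
    push_cast
    ring
  · have step : ∀ (k : ℤ) (t : ℂ), f (t + ((k + 1 : ℤ) : ℂ) * ω)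
        = Complex.exp (ξ * (t + k * ω) + η) * f (t + k * ω) := by
      intro k t
      rw [← hω]; congr 1; push_cast; ring
    induction k using Int.induction_on with
    | zero => intro t; simp
    | succ k ih =>
      intro t
      rw [step, ih, ← Complex.exp_add, ← Complex.exp_add, ← mul_assoc, ← Complex.exp_add]
      congr 2
      push_cast
      ring
    | pred k ih =>
      intro t
      have h := step (-(k : ℤ) - 1) t
      rw [sub_add_cancel, ih] at h
      apply mul_left_cancel₀ (Complex.exp_ne_zero (ξ * (t + ((-(k : ℤ) - 1 : ℤ) : ℂ) * ω) + η))
      rw [← h, ← Complex.exp_add, ← Complex.exp_add, ← mul_assoc (Complex.exp _), ← Complex.exp_add]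
      congr 2
      push_cast
      ring

lemma sf_shift {f : ℂ → ℂ} {ω ξ : ℂ} {c : ℤ → ℂ}
    (hc : ∀ (k : ℤ) (t : ℂ), f (t + k * ω) = Complex.exp (k * (ξ * t)) * c k * f t)
    (δ : ℂ) (k : ℤ) (t : ℂ) (N : ℕ) :
    sf f δ (t + k * ω) N
      = Complex.exp (k * (ξ * (N * t + δ * ∑ i ∈ range N, (i : ℂ)))) * c k ^ N * sf f δ t N := by
  unfold sf
  induction N with
  | zero => simp
  | succ N ih =>
    rw [prod_range_succ, ih, prod_range_succ, sum_range_succ,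
      show t + k * ω + N * δ = t + N * δ + k * ω by ring, hc]
    have : Complex.exp (k * (ξ * (((N + 1 : ℕ) : ℂ) * t
          + δ * (∑ i ∈ range N, (i : ℂ) + (N : ℂ)))))
        = Complex.exp (k * (ξ * (N * t + δ * ∑ i ∈ range N, (i : ℂ))))
          * Complex.exp (k * (ξ * (t + N * δ))) := by
      rw [← Complex.exp_add]; congr 1; push_cast; ring
    rw [this]
    ring

/-- The exponent `C` acquired under a unit shift, as a function of `w_i = x_i + δ + s`. -/
noncomputable def shiftExponent (ξ δ : ℂ) {m : ℕ} (w : Fin m → ℂ) (μ : Fin m → ℕ) : ℂ :=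
  ξ * (∑ i, (μ i : ℂ) * w i
    + δ * (∑ i, ∑ t ∈ range (μ i), (t : ℂ) + ∑ t ∈ range (∑ i, μ i), (t : ℂ)))

/-- The exponent depends on `y` and `z` only through the sums `w i = y i + z`. -/
lemma block_shift {f : ℂ → ℂ} {ω ξ : ℂ} {c : ℤ → ℂ} (hc0 : ∀ k, c k ≠ 0)
    (hcneg : ∀ k, c (-k) = c k)
    (hc : ∀ (k : ℤ) (t : ℂ), f (t + k * ω) = Complex.exp (k * (ξ * t)) * c k * f t)
    (δ : ℂ) {m : ℕ} (y w : Fin m → ℂ) (z : ℂ) (hw : ∀ i, y i + z = w i) (k : ℤ)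
    (μ : Fin m → ℕ) :
    (∏ i, sf f δ (y i + k * ω) (μ i)) / sf f δ (z - k * ω) (∑ i, μ i)
      = Complex.exp (k * shiftExponent ξ δ w μ)
        * ((∏ i, sf f δ (y i) (μ i)) / sf f δ z (∑ i, μ i)) := by
  have hz : z - k * ω = z + ((-k : ℤ) : ℂ) * ω := by push_cast; ring
  rw [hz, sf_shift hc, hcneg]
  simp only [sf_shift hc, prod_mul_distrib]
  rw [prod_pow_eq_pow_sum, ← Complex.exp_sum, mul_div_mul_comm, mul_div_mul_comm,
    div_self (pow_ne_zero _ (hc0 k)), mul_one, ← Complex.exp_sub]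
  congr 2
  unfold shiftExponent
  simp only [← hw, mul_add, mul_sum, sum_add_distrib, ← sum_mul]
  push_cast
  simp only [sum_mul, mul_sum, neg_mul, sum_neg_distrib]
  have e : ∑ i, (k : ℂ) * (ξ * ((μ i : ℂ) * z)) = k * (ξ * ((∑ i, (μ i : ℂ)) * z)) := by
    simp only [mul_sum, sum_mul]
  simp only [mul_sum, sum_mul] at e ⊢
  ring

/-- Lemma 3.2: quasi-periodicity of `E^{m,n}`. If `[x+ω] = e^{ξx+η}[x]`, then shifting
`a`, `u`, `v` by integer multiples of `ω` with total weight zero leaves every summand,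
and hence the series `E^{m,n}`, unchanged. -/
theorem E_quasi_periodicity
    (f : ℂ → ℂ) (hf : f ≠ 0) (hodd : ∀ t : ℂ, f (-t) = -f t) (hdiff : Differentiable ℂ f)
    (hRiem : ∀ x y u v : ℂ,
      f (x + y) * f (x - y) * f (u + v) * f (u - v) =
        f (x + u) * f (x - u) * f (y + v) * f (y - v)
          - f (x + v) * f (x - v) * f (y + u) * f (y - u))
    (δ : ℂ) (hδ : ∀ k : ℤ, k ≠ 0 → f ((k : ℂ) * δ) ≠ 0)
    (ω ξ η : ℂ) (hω : ∀ t : ℂ, f (t + ω) = Complex.exp (ξ * t + η) * f t)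
    (m n : ℕ) (a x : Fin m → ℂ) (s : ℂ) (u v : Fin n → ℂ)
    (l : Fin m → ℤ) (p q : Fin n → ℤ)
    (hsum : (∑ i, l i) + (∑ k, p k) + (∑ k, q k) = 0)
    (hx : ∀ i j, i ≠ j → f (x i - x j) ≠ 0)
    (hxs : ∀ i, f (x i + s) ≠ 0)
    (ha1 : ∀ (j : Fin m) (t : ℕ), f (δ + s + x j - a j + (t : ℂ) * δ) ≠ 0)
    (ha2 : ∀ (j : Fin m) (t : ℕ),
      f (δ + s + x j - (a j + (l j : ℂ) * ω) + (t : ℂ) * δ) ≠ 0)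
    (hxd : ∀ (i j : Fin m) (t : ℕ), f (x i - x j + δ + (t : ℂ) * δ) ≠ 0)
    (hu1 : ∀ (k : Fin n) (t : ℕ), f (δ + s - u k + (t : ℂ) * δ) ≠ 0)
    (hu2 : ∀ (k : Fin n) (t : ℕ),
      f (δ + s - (u k + (p k : ℂ) * ω) + (t : ℂ) * δ) ≠ 0)
    (hv1 : ∀ (i : Fin m) (k : Fin n) (t : ℕ),
      f (x i + δ + s - v k + (t : ℂ) * δ) ≠ 0)
    (hv2 : ∀ (i : Fin m) (k : Fin n) (t : ℕ),
      f (x i + δ + s - (v k + (q k : ℂ) * ω) + (t : ℂ) * δ) ≠ 0) :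
    (∀ μ : Fin m → ℕ,
      Eterm f δ (fun i => a i + (l i : ℂ) * ω) x s (fun k => u k + (p k : ℂ) * ω)
        (fun k => v k + (q k : ℂ) * ω) μ = Eterm f δ a x s u v μ) ∧
    Evw f δ (fun i => a i + (l i : ℂ) * ω) x s (fun k => u k + (p k : ℂ) * ω)
      (fun k => v k + (q k : ℂ) * ω) = Evw f δ a x s u v := by
  obtain ⟨c, hc0, hcneg, hc⟩ := exists_multiplier f hf hodd ω ξ η hω
  have key : ∀ μ : Fin m → ℕ,
      Eterm f δ (fun i => a i + (l i : ℂ) * ω) x s (fun k => u k + (p k : ℂ) * ω)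
        (fun k => v k + (q k : ℂ) * ω) μ = Eterm f δ a x s u v μ := by
    intro μ
    set C := shiftExponent ξ δ (fun i => x i + δ + s) μ with hC
    have hA : ∀ j,
        (sf f δ (s + x j) (∑ i, μ i)
            / sf f δ (δ + s + x j - (a j + (l j : ℂ) * ω)) (∑ i, μ i))
          * ∏ i, sf f δ (x i - x j + (a j + (l j : ℂ) * ω)) (μ i) / sf f δ (x i - x j + δ) (μ i)
        = Complex.exp (l j * C)
          * ((sf f δ (s + x j) (∑ i, μ i) / sf f δ (δ + s + x j - a j) (∑ i, μ i))
          * ∏ i, sf f δ (x i - x j + a j) (μ i) / sf f δ (x i - x j + δ) (μ i)) := by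
      intro j
      have h := block_shift hc0 hcneg hc δ (fun i => x i - x j + a j) (fun i => x i + δ + s)
        (δ + s + x j - a j) (fun i => by ring) (l j) μ
      rw [← hC] at h
      simp only [add_assoc, sub_sub, prod_div_distrib] at h ⊢
      linear_combination (sf f δ (s + x j) (∑ i, μ i) / ∏ i, sf f δ (x i - x j + δ) (μ i)) * h
    have hU : ∀ k,
        (sf f δ (v k + (q k : ℂ) * ω) (∑ i, μ i)
            / sf f δ (δ + s - (u k + (p k : ℂ) * ω)) (∑ i, μ i))
          * ∏ i, sf f δ (x i + (u k + (p k : ℂ) * ω)) (μ i)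
            / sf f δ (x i + δ + s - (v k + (q k : ℂ) * ω)) (μ i)
        = Complex.exp ((p k + q k) * C)
          * ((sf f δ (v k) (∑ i, μ i) / sf f δ (δ + s - u k) (∑ i, μ i))
          * ∏ i, sf f δ (x i + u k) (μ i) / sf f δ (x i + δ + s - v k) (μ i)) := by
      intro k
      have h1 := block_shift hc0 hcneg hc δ (fun i => x i + u k) (fun i => x i + δ + s)
        (δ + s - u k) (fun i => by ring) (p k) μ
      -- `v k` enters with the opposite sign, so its block is the inverse of one shifted by `-q k`.
      have h2 := congrArg (·⁻¹) (block_shift hc0 hcneg hc δ (fun i => x i + δ + s - v k)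
        (fun i => x i + δ + s) (v k) (fun i => by ring) (-q k) μ)
      simp only [Int.cast_neg, neg_mul, sub_neg_eq_add, ← sub_eq_add_neg, mul_inv,
        ← Complex.exp_neg, neg_neg, inv_div] at h2
      rw [← hC] at h1 h2
      have h := congrArg₂ (· * ·) h1 h2
      simp only [add_assoc, sub_sub, add_sub_assoc, prod_div_distrib] at h ⊢
      rw [add_mul, Complex.exp_add]
      linear_combination h
    have htot : (∏ j, Complex.exp (l j * C)) * ∏ k, Complex.exp ((p k + q k) * C) = 1 := by
      have hs : (∑ i, (l i : ℂ)) + (∑ k, (p k : ℂ)) + (∑ k, (q k : ℂ)) = 0 := by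
        exact_mod_cast hsum
      rw [← Complex.exp_sum, ← Complex.exp_sum, ← Complex.exp_add, ← sum_mul, ← sum_mul,
        sum_add_distrib, ← add_mul, ← add_assoc, hs, zero_mul, Complex.exp_zero]
    unfold Eterm
    simp only [hA, hU]
    rw [prod_mul_distrib (f := fun j => Complex.exp (l j * C)),
      prod_mul_distrib (f := fun k => Complex.exp ((p k + q k) * C))]
    generalize (∏ j, Complex.exp (l j * C)) = P at *
    generalize (∏ k, Complex.exp ((p k + q k) * C)) = R at *
    rw [mul_assoc, mul_mul_mul_comm P _ R, htot, one_mul, ← mul_assoc]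
  exact ⟨key, tsum_congr key⟩
end

section
/- (Duality between E^{m,n+2} and E^{n,m+2}.) Let a, x ∈ ℂ^m, s, c_1, c_2, d_1, d_2 ∈ ℂ and u, v ∈ ℂ^n satisfy the balancing condition Σ_{i=1}^m a_i + (c_1 + c_2 + d_1 + d_2) + Σ_{k=1}^n (u_k + v_k) = (n+1)δ + (n+2)s, together with the termination condition d_2 = −Nδ for some N ∈ ℕ. Set t = d_1 + d_2 − s − δ, b_k = δ + s − u_k − v_k and y_k = δ + s − v_k for k = 1,…,n, z_i = x_i − a_i and w_i = d_1 + d_2 − s − x_i for i = 1,…,m. Then, for generic parameters (all brackets appearing in denominators nonzero): E^{m,n+2}( a; x | s; (c_1, c_2, u_1,…,u_n); (d_1, d_2, v_1,…,v_n) ) = ( [δ+s−c_1−d_1]_N [δ+s−c_2−d_1]_N / ([δ+s−c_1]_N [δ+s−c_2]_N) ) · ∏_{i=1}^m ( [δ+s+x_i]_N [δ+s+x_i−a_i−d_1]_N / ([δ+s+x_i−a_i]_N [δ+s+x_i−d_1]_N) ) · ∏_{k=1}^n ( [v_k]_N [δ+s−u_k−d_1]_N / ([δ+s−u_k]_N [v_k−d_1]_N)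 ) · E^{n,m+2}( b; y | t; (−c_1, −c_2, z_1,…,z_m); (d_1, d_2, w_1,…,w_m) ). -/
/-!
The identity is the image of a symmetric duality. For variables `x`, `y` and parameters `a`, `b`
with `∑ a = ∑ b`, let `dualSum x a y b N` be the sum over `|μ| = N` of

  `∏_{i,j} [x_i - x_j + a_j]_{μ_i} / [x_i - x_j - μ_j δ]_{μ_i}`
  `· ∏_{i,k} [x_i + y_k - b_k]_{μ_i} / [x_i + y_k]_{μ_i}`.

Duality (`dualSum_comm`) says that it is invariant under `(x, a) ↔ (y, b)`.

* If all `a_i`, `b_k` are nonpositive multiples of `δ`, arrange variables in strings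
  `x_i, x_i + δ, …`. The nonzero summands then correspond to the subsets of the strings that have
  nonzero weight in the source identity (`source_identity`), which equates a sum over `N`-subsets
  of the `X`-variables with the same sum for the `Y`-variables. The source identity expands, in two
  ways, the sum of the determinants obtained from a Frobenius (elliptic Cauchy) matrix by replacing
  `N` rows, respectively `N` columns, by those of its shift (`frobenius_det`,
  `sum_det_rows_eq_cols`).
* As a function of one pair `(a_j, b_l)` with fixed difference, both sides are theta functions of
  degree `2N` with the same characteristic. Such a function is determined by its values at `2N + 1`
  points whose differences are not zeros of the bracket (`thetaSpace_eq_zero`, a consequence of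
  the Riemann relation), so multiples of `δ` can be replaced by arbitrary values one pair at a time.

Adjoining one variable `-s - Nδ` to `x` and one variable `δ + s - d₁` to `y` turns `dualSum` into
the very well-poised series, up to an explicit factor (`dualSum_eq_Evw`): the summation index of
the extra variable is `N - |μ|`. Since `δ + s - d₁ = -t - Nδ`, the other side of the duality is
the dual very well-poised series in the same way (`Evw_duality_generic`). This needs `x`, `v`,
`d₁` to be generic modulo `ℤδ`. Such parameters are dense on a suitable line through the given ones, and both
sides are continuous at the given ones, where the denominators do not vanish (`Evw_duality`).
-/

open Finset

/-! ### Brackets and theta functions -/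

/-- The standing assumptions on the bracket `f = [·]`: a nonzero odd entire function satisfying
the Riemann relation. -/
structure IsBracket (f : ℂ → ℂ) : Prop where
  ne_zero : f ≠ 0
  odd : ∀ t : ℂ, f (-t) = -f t
  diff : Differentiable ℂ f
  riem : ∀ x y u v : ℂ,
      f (x + y) * f (x - y) * f (u + v) * f (u - v) =
        f (x + u) * f (x - u) * f (y + v) * f (y - v)
          - f (x + v) * f (x - v) * f (y + u) * f (y - u)

namespace IsBracket

variable {f : ℂ → ℂ}

theorem zero (hb : IsBracket f) : f 0 = 0 := by
  have h := hb.odd 0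
  rw [neg_zero] at h
  linear_combination h / 2

theorem countable_zeros (hb : IsBracket f) : {z | f z = 0}.Countable := by
  obtain ⟨z₀, hz₀⟩ := Function.ne_iff.mp hb.ne_zero
  have han : AnalyticOnNhd ℂ f Set.univ := fun z _ => hb.diff.analyticAt z
  have h := han.preimage_zero_mem_codiscrete hz₀
  rw [mem_codiscrete'] at h
  have h2 : (f ⁻¹' {0}ᶜ)ᶜ = {z | f z = 0} := by ext z; simp
  rw [h2] at h
  have := h.2.to_subtype
  exact Set.countable_coe_iff.mp (countable_of_Lindelof_of_discrete (X := {z | f z = 0}))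

/-- Countably many nonconstant affine conditions `[c i + e i * h] ≠ 0` hold simultaneously on a
dense set of `h`. -/
theorem dense_avoid (hb : IsBracket f) {ι : Type*} [Countable ι] (c e : ι → ℂ)
    (he : ∀ i, e i ≠ 0) : Dense {h : ℂ | ∀ i, f (c i + e i * h) ≠ 0} := by
  have hcount : (⋃ i, (fun h : ℂ => c i + e i * h) ⁻¹' {z | f z = 0}).Countable := by
    refine Set.countable_iUnion fun i => hb.countable_zeros.preimage_of_injOn ?_
    intro a _ b _ hab
    simpa [he i] using hab
  convert hcount.dense_compl ℂ using 1
  ext h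
  simp

theorem exists_avoid (hb : IsBracket f) {ι : Type*} [Countable ι] (c e : ι → ℂ)
    (he : ∀ i, e i ≠ 0) : ∃ h : ℂ, ∀ i, f (c i + e i * h) ≠ 0 :=
  (hb.dense_avoid c e he).nonempty

/-- Products of brackets with a common sum of zeros: the Riemann relation, recentred. -/
theorem three_term (hb : IsBracket f) (z p w₁ w₂ w₁' w₂' : ℂ) (hw : w₁ + w₂ = w₁' + w₂') :
    f (z - w₁) * f (z - w₂) * (f (p - w₁') * f (p - w₂'))
      - f (z - w₁') * f (z - w₂') * (f (p - w₁) * f (p - w₂))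
      = f (z - p) * (f (z - (w₁ + w₂ - p)) * (f (w₁ - w₂') * f (w₁ - w₁'))) := by
  have h := hb.riem (z - (w₁ + w₂) / 2) (p - (w₁ + w₂) / 2) (w₁ - (w₁ + w₂) / 2)
    (w₁' - (w₁ + w₂) / 2)
  have e2 : w₂' = w₁ + w₂ - w₁' := by linear_combination -hw
  subst e2
  ring_nf at h ⊢
  linear_combination -h

end IsBracket

section Theta

variable {f : ℂ → ℂ}

/-- The product `z ↦ ∏_{w ∈ W} [z - w]`. -/
noncomputable def thetaGen (f : ℂ → ℂ) (W : Multiset ℂ) (z : ℂ) : ℂ :=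
  (W.map fun w => f (z - w)).prod

theorem thetaGen_cons (w : ℂ) (W : Multiset ℂ) (z : ℂ) :
    thetaGen f (w ::ₘ W) z = f (z - w) * thetaGen f W z := by
  simp [thetaGen]

theorem thetaGen_add (W W' : Multiset ℂ) (z : ℂ) :
    thetaGen f (W + W') z = thetaGen f W z * thetaGen f W' z := by
  simp [thetaGen]

/-- Theta functions of degree `M` and characteristic `τ`: the span of the products
`∏_{w ∈ W} [z - w]` over multisets `W` with `M` elements and sum `τ`. -/
noncomputable def thetaSpace (f : ℂ → ℂ) (M : ℕ) (τ : ℂ) : Submodule ℂ (ℂ → ℂ) :=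
  Submodule.span ℂ {F | ∃ W : Multiset ℂ, W.card = M ∧ W.sum = τ ∧ F = thetaGen f W}

theorem thetaGen_mem (W : Multiset ℂ) : thetaGen f W ∈ thetaSpace f W.card W.sum :=
  Submodule.subset_span ⟨W, rfl, rfl, rfl⟩

theorem thetaSpace_mul_bracket (w : ℂ) {M : ℕ} {τ : ℂ} {F : ℂ → ℂ} (hF : F ∈ thetaSpace f M τ) :
    (fun z => f (z - w) * F z) ∈ thetaSpace f (M + 1) (w + τ) := by
  induction hF using Submodule.span_induction with
  | mem F h =>
    obtain ⟨W, rfl, rfl, rfl⟩ := h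
    refine Submodule.subset_span ⟨w ::ₘ W, by simp, by simp, ?_⟩
    funext z
    rw [thetaGen_cons]
  | zero =>
    convert Submodule.zero_mem (thetaSpace f (M + 1) (w + τ)) using 1
    funext z
    simp
  | add F G _ _ hF hG =>
    convert Submodule.add_mem _ hF hG using 1
    funext z
    simp [mul_add]
  | smul c F _ hF =>
    convert Submodule.smul_mem _ c hF using 1
    funext z
    simp
    ring

/-- The functions `z ↦ [z - p] K(z)` with `K` a theta function of degree `M` and
characteristic `τ`. -/
def divBy (f : ℂ → ℂ) (p : ℂ) (M : ℕ) (τ : ℂ) (F : ℂ → ℂ) : Prop :=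
  ∃ K ∈ thetaSpace f M τ, ∀ z, F z = f (z - p) * K z

theorem divBy.lincomb {p : ℂ} {M : ℕ} {τ : ℂ} {F G H : ℂ → ℂ} (hF : divBy f p M τ F)
    (hG : divBy f p M τ G) (c d : ℂ) (hH : ∀ z, H z = c * F z + d * G z) : divBy f p M τ H := by
  obtain ⟨K, hK, hFK⟩ := hF
  obtain ⟨L, hL, hGL⟩ := hG
  refine ⟨c • K + d • L, Submodule.add_mem _ (Submodule.smul_mem _ _ hK)
    (Submodule.smul_mem _ _ hL), fun z => ?_⟩
  simp only [hH, hFK, hGL, Pi.add_apply, Pi.smul_apply, smul_eq_mul]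
  ring

/-- Replacing two zeros by two others with the same sum. -/
theorem divBy_pair (hb : IsBracket f) (p w₁ w₂ w₁' w₂' : ℂ) (hw : w₁ + w₂ = w₁' + w₂')
    (R : Multiset ℂ) (τ : ℂ) (hτ : τ = w₁ + w₂ + R.sum - p) :
    divBy f p (R.card + 1) τ fun z =>
      thetaGen f (w₁ ::ₘ w₂ ::ₘ R) z * (f (p - w₁') * f (p - w₂'))
        - thetaGen f (w₁' ::ₘ w₂' ::ₘ R) z * (f (p - w₁) * f (p - w₂)) := by
  refine ⟨(f (w₁ - w₂') * f (w₁ - w₁')) • thetaGen f ((w₁ + w₂ - p) ::ₘ R),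
    Submodule.smul_mem _ _ ?_, fun z => ?_⟩
  · have := thetaGen_mem (f := f) ((w₁ + w₂ - p) ::ₘ R)
    rw [Multiset.card_cons, Multiset.sum_cons] at this
    rwa [hτ, show w₁ + w₂ + R.sum - p = w₁ + w₂ - p + R.sum by ring]
  · simp only [thetaGen_cons, Pi.smul_apply, smul_eq_mul]
    linear_combination thetaGen f R z * hb.three_term z p w₁ w₂ w₁' w₂' hw

theorem exists_eq_cons_of_card {M : ℕ} {W : Multiset ℂ} (h : W.card = M + 1) :
    ∃ w R, W = w ::ₘ R := by
  obtain ⟨w, hw⟩ := Multiset.card_pos_iff_exists_mem.mp (show 0 < W.card by omega)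
  exact ⟨w, Multiset.exists_cons_of_mem hw⟩

theorem thetaGen_ne_zero_iff (W : Multiset ℂ) (z : ℂ) :
    thetaGen f W z ≠ 0 ↔ ∀ w ∈ W, f (z - w) ≠ 0 := by
  simp [thetaGen, Multiset.prod_eq_zero_iff]

/-- A product of at least two brackets vanishing at `p` is `[z - p]` times a theta function. -/
theorem divBy_of_zero (hb : IsBracket f) (p : ℂ) (W : Multiset ℂ) (M : ℕ) (hM : W.card = M + 2)
    (h0 : thetaGen f W p = 0) : divBy f p (M + 1) (W.sum - p) (thetaGen f W) := by
  obtain ⟨w₁, hw₁, hz⟩ : ∃ w ∈ W, f (p - w) = 0 := by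
    by_contra! h
    exact (thetaGen_ne_zero_iff W p).mpr h h0
  obtain ⟨R', rfl⟩ := Multiset.exists_cons_of_mem hw₁
  rw [Multiset.card_cons] at hM
  obtain ⟨w₂, R, rfl⟩ := exists_eq_cons_of_card (M := M) (W := R') (by omega)
  obtain ⟨h, hh⟩ := hb.exists_avoid ![p, p - (w₁ + w₂)] ![-1, 1] (by simp [Fin.forall_fin_two])
  simp only [Fin.forall_fin_two, Matrix.cons_val_zero, Matrix.cons_val_one] at hh
  have h1 : f (p - h) ≠ 0 := by convert hh.1 using 2; ring
  have h2 : f (p - (w₁ + w₂ - h)) ≠ 0 := by convert hh.2 using 2; ring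
  have hcard : R.card = M := by simpa using hM
  obtain ⟨K, hK, hKz⟩ := divBy_pair hb p w₁ w₂ h (w₁ + w₂ - h) (by ring) R
    ((w₁ ::ₘ w₂ ::ₘ R).sum - p) (by simp; ring)
  rw [hcard] at hK
  refine ⟨(f (p - h) * f (p - (w₁ + w₂ - h)))⁻¹ • K, Submodule.smul_mem _ _ hK, fun z => ?_⟩
  have := hKz z
  simp only [hz, zero_mul, mul_zero, sub_zero] at this
  simp only [Pi.smul_apply, smul_eq_mul]
  field_simp
  linear_combination this

/-- Two products with the same degree and characteristic are proportional modulo multiples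
of `[z - p]`, the factors being their values at `p`. -/
theorem divBy_cross (hb : IsBracket f) (p : ℂ) (M : ℕ) : ∀ W W' : Multiset ℂ, W.card = M + 1 →
    W'.card = M + 1 → W.sum = W'.sum → divBy f p M (W.sum - p) fun z =>
      thetaGen f W z * thetaGen f W' p - thetaGen f W' z * thetaGen f W p := by
  induction M with
  | zero =>
    intro W W' h h' hs
    rw [zero_add, Multiset.card_eq_one] at h h'
    obtain ⟨w, rfl⟩ := h
    obtain ⟨w', rfl⟩ := h'
    simp only [Multiset.sum_singleton] at hs
    subst hs
    exact ⟨0, Submodule.zero_mem _, fun z => by simp⟩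
  | succ M ih =>
    intro W W' h h' hs
    by_cases hW : thetaGen f W p = 0
    · have h1 := divBy_of_zero hb p W M h hW
      exact h1.lincomb h1 (thetaGen f W' p) 0 fun z => by rw [hW]; ring
    by_cases hW' : thetaGen f W' p = 0
    · have h1 := divBy_of_zero hb p W' M h' hW'
      rw [← hs] at h1
      exact h1.lincomb h1 (-thetaGen f W p) 0 fun z => by rw [hW']; ring
    have split : ∀ V : Multiset ℂ, V.card = M + 1 + 1 → ∃ w₁ w₂ R, V = w₁ ::ₘ w₂ ::ₘ R := by
      intro V hV
      obtain ⟨w₁, V', rfl⟩ := exists_eq_cons_of_card hV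
      obtain ⟨w₂, R, rfl⟩ := exists_eq_cons_of_card (M := M) (by simpa using hV)
      exact ⟨w₁, w₂, R, rfl⟩
    obtain ⟨w₁', w₂', R', rfl⟩ := split W' h'
    obtain ⟨w₁, w₂, R, rfl⟩ := split W h
    -- pass through products sharing a generic zero `h₀`
    obtain ⟨h₀, hh⟩ := hb.exists_avoid ![p, p - (w₁ + w₂), p - (w₁' + w₂')] ![-1, 1, 1]
      (by intro i; fin_cases i <;> simp)
    have g0 : f (p - h₀) ≠ 0 := by have := hh 0; simp at this; convert this using 2; ring
    have g1 : f (p - (w₁ + w₂ - h₀)) ≠ 0 := by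
      have := hh 1; simp at this; convert this using 2; ring
    have g2 : f (p - (w₁' + w₂' - h₀)) ≠ 0 := by
      have := hh 2; simp at this; convert this using 2; ring
    have hc : R.card = M := by simpa using h
    have hc' : R'.card = M := by simpa using h'
    have hs1 : w₁ + w₂ + R.sum = w₁' + w₂' + R'.sum := by simpa [add_assoc] using hs
    have d1 := divBy_pair hb p w₁ w₂ h₀ (w₁ + w₂ - h₀) (by ring) R
      ((w₁ ::ₘ w₂ ::ₘ R).sum - p) (by simp; ring)
    have d2 := divBy_pair hb p w₁' w₂' h₀ (w₁' + w₂' - h₀) (by ring) R'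
      ((w₁ ::ₘ w₂ ::ₘ R).sum - p) (by rw [hs]; simp; ring)
    rw [hc] at d1
    rw [hc'] at d2
    obtain ⟨K, hK, hKz⟩ := ih ((w₁ + w₂ - h₀) ::ₘ R) ((w₁' + w₂' - h₀) ::ₘ R') (by simp [hc])
      (by simp [hc']) (by simp; linear_combination hs1)
    have d3 : divBy f p (M + 1) ((w₁ ::ₘ w₂ ::ₘ R).sum - p) fun z => f (z - h₀) *
        (thetaGen f ((w₁ + w₂ - h₀) ::ₘ R) z * thetaGen f ((w₁' + w₂' - h₀) ::ₘ R') p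
          - thetaGen f ((w₁' + w₂' - h₀) ::ₘ R') z * thetaGen f ((w₁ + w₂ - h₀) ::ₘ R) p) := by
      refine ⟨fun z => f (z - h₀) * K z, ?_, fun z => ?_⟩
      · have := thetaSpace_mul_bracket h₀ hK
        convert this using 2
        simp
        ring
      · simp only [hKz]
        ring
    simp only [thetaGen_cons] at hW hW' d1 d2 d3 ⊢
    -- eliminate the two intermediate products
    refine (d1.lincomb d2 (f (p - w₁') * f (p - w₂') * thetaGen f R' p /
      (f (p - h₀) * f (p - (w₁ + w₂ - h₀)))) (-(f (p - w₁) * f (p - w₂) * thetaGen f R p) /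
      (f (p - h₀) * f (p - (w₁' + w₂' - h₀)))) (fun z => rfl)).lincomb d3 1
      (f (p - w₁) * f (p - w₂) * (f (p - w₁') * f (p - w₂')) / (f (p - h₀) *
      f (p - (w₁ + w₂ - h₀)) * f (p - (w₁' + w₂' - h₀)))) (fun z => ?_)
    field_simp
    ring

theorem exists_thetaGen_ne_zero (hb : IsBracket f) (p : ℂ) (M : ℕ) (τ : ℂ) :
    ∃ W : Multiset ℂ, W.card = M + 2 ∧ W.sum = τ ∧ thetaGen f W p ≠ 0 := by
  induction M generalizing τ with
  | zero =>
    obtain ⟨h, hh⟩ := hb.exists_avoid ![p, p - τ] ![-1, 1] (by simp [Fin.forall_fin_two])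
    refine ⟨{h, τ - h}, by simp, by simp, ?_⟩
    rw [thetaGen_ne_zero_iff]
    simp only [Fin.forall_fin_two, Matrix.cons_val_zero, Matrix.cons_val_one] at hh
    intro w hw
    simp only [Multiset.insert_eq_cons, Multiset.mem_cons, Multiset.mem_singleton] at hw
    rcases hw with rfl | rfl
    · convert hh.1 using 2; ring
    · convert hh.2 using 2; ring
  | succ M ih =>
    obtain ⟨h, hh⟩ := hb.exists_avoid (fun _ : Unit => p) (fun _ => -1) (by simp)
    obtain ⟨W, hc, hs, hne⟩ := ih (τ - h)
    refine ⟨h ::ₘ W, by simp [hc], by simp [hs], ?_⟩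
    rw [thetaGen_cons]
    refine mul_ne_zero ?_ hne
    convert hh () using 2; ring

/-- A theta function of degree `M + 1` with `M + 1` zeros whose sum avoids the characteristic
vanishes identically. -/
theorem thetaSpace_eq_zero_of_sum (hb : IsBracket f) (M : ℕ) : ∀ (τ : ℂ) (F : ℂ → ℂ),
    F ∈ thetaSpace f (M + 1) τ → ∀ z : Fin (M + 1) → ℂ,
    (∀ i j, i ≠ j → f (z i - z j) ≠ 0) → (∀ i, F (z i) = 0) → f ((∑ i, z i) - τ) ≠ 0 →
    F = 0 := by
  induction M with
  | zero =>
    intro τ F hF z _ h0 hne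
    have hform : ∃ C : ℂ, F = fun z => C * f (z - τ) := by
      clear h0
      induction hF using Submodule.span_induction with
      | mem F h =>
        obtain ⟨W, hc, hs, rfl⟩ := h
        obtain ⟨w, rfl⟩ := Multiset.card_eq_one.mp hc
        simp only [Multiset.sum_singleton] at hs
        exact ⟨1, by funext z; simp [thetaGen, hs]⟩
      | zero => exact ⟨0, by funext z; simp⟩
      | add F G _ _ hF hG =>
        obtain ⟨C, rfl⟩ := hF
        obtain ⟨D, rfl⟩ := hG
        exact ⟨C + D, by funext z; simp [add_mul]⟩
      | smul c F _ hF =>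
        obtain ⟨C, rfl⟩ := hF
        exact ⟨c * C, by funext z; simp [mul_assoc]⟩
    obtain ⟨C, rfl⟩ := hform
    have := h0 0
    rw [Fin.sum_univ_succ, Finset.univ_eq_empty, Finset.sum_empty, add_zero] at hne
    have hC : C = 0 := (mul_eq_zero.mp this).resolve_right hne
    funext z
    simp [hC]
  | succ M ih =>
    intro τ F hF z hz h0 hne
    obtain ⟨W', hc', hs', hne'⟩ := exists_thetaGen_ne_zero hb (z 0) M τ
    have hdiv : divBy f (z 0) (M + 1) (τ - z 0) fun y =>
        F y * thetaGen f W' (z 0) - thetaGen f W' y * F (z 0) := by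
      clear h0
      induction hF using Submodule.span_induction with
      | mem F h =>
        obtain ⟨W, hc, hs, rfl⟩ := h
        have := divBy_cross hb (z 0) (M + 1) W W' hc hc' (by rw [hs, hs'])
        rwa [hs] at this
      | zero => exact ⟨0, Submodule.zero_mem _, fun y => by simp⟩
      | add F G _ _ hF hG => exact hF.lincomb hG 1 1 fun y => by simp; ring
      | smul c F _ hF => exact hF.lincomb hF c 0 fun y => by simp; ring
    obtain ⟨K, hK, hKz⟩ := hdiv
    simp only [h0 0, mul_zero, sub_zero] at hKz
    have hK0 : K = 0 := by
      refine ih (τ - z 0) K hK (fun i => z i.succ)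
        (fun i j hij => hz _ _ (by simpa using hij)) (fun i => ?_) ?_
      · have h1 := hKz (z i.succ)
        rw [h0, zero_mul] at h1
        exact (mul_eq_zero.mp h1.symm).resolve_left (hz _ _ (Fin.succ_ne_zero i))
      · rw [Fin.sum_univ_succ] at hne
        convert hne using 2
        ring
    funext y
    have := hKz y
    rw [hK0, Pi.zero_apply, mul_zero] at this
    exact (mul_eq_zero.mp this).resolve_right hne'

/-- A theta function of degree `M` with `M + 1` zeros that are distinct (in the sense of the
bracket) vanishes identically. -/
theorem thetaSpace_eq_zero (hb : IsBracket f) (M : ℕ) (τ : ℂ) (F : ℂ → ℂ)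
    (hF : F ∈ thetaSpace f M τ) (z : Fin (M + 1) → ℂ) (hz : ∀ i j, i ≠ j → f (z i - z j) ≠ 0)
    (h0 : ∀ i, F (z i) = 0) : F = 0 := by
  funext y
  -- multiply by a generic bracket to make the characteristic generic
  obtain ⟨w, hw⟩ := hb.exists_avoid ![y, (∑ i, z i) - τ] ![-1, -1] (by simp [Fin.forall_fin_two])
  simp only [Fin.forall_fin_two, Matrix.cons_val_zero, Matrix.cons_val_one] at hw
  have := thetaSpace_eq_zero_of_sum hb M _ _ (thetaSpace_mul_bracket w hF) z hz
    (fun i => by simp [h0 i]) (by convert hw.2 using 2; ring)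
  have h2 := congrFun this y
  refine (mul_eq_zero.mp h2).resolve_left ?_
  convert hw.1 using 3
  ring

end Theta

/-! ### The Frobenius determinant and the source identity -/

section Determinant

variable {f : ℂ → ℂ}

theorem Del_succ (f : ℂ → ℂ) {n : ℕ} (x : Fin (n + 1) → ℂ) :
    Del f x = (∏ j : Fin n, f (x 0 - x j.succ)) * Del f (fun i => x i.succ) := by
  unfold Del
  rw [Fin.prod_univ_succ]
  congr 1
  · rw [Finset.prod_filter, Fin.prod_univ_succ]
    simp
  · refine Finset.prod_congr rfl fun i _ => ?_
    rw [Finset.prod_filter, Finset.prod_filter, Fin.prod_univ_succ]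
    simp

/-- If each ratio of factors in two difference products splits as `H i j * H j i`, then the ratio
of the difference products is the product of `H` over ordered pairs. -/
theorem Del_eq_mul_prod (f : ℂ → ℂ) {n : ℕ} (x x' : Fin n → ℂ) (H : Fin n → Fin n → ℂ)
    (h : ∀ i j, i ≠ j → f (x' i - x' j) = f (x i - x j) * (H i j * H j i)) :
    Del f x' * ∏ i, H i i = Del f x * ∏ i, ∏ j, H i j := by
  induction n with
  | zero => simp [Del]
  | succ n ih =>
    have ih' := ih (fun i => x i.succ) (fun i => x' i.succ) (fun i j => H i.succ j.succ)
      (fun i j hij => h _ _ (by simpa using hij))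
    have h0 : ∏ j : Fin n, f (x' 0 - x' j.succ) = (∏ j : Fin n, f (x 0 - x j.succ))
        * ((∏ j : Fin n, H 0 j.succ) * ∏ j : Fin n, H j.succ 0) := by
      rw [← Finset.prod_mul_distrib, ← Finset.prod_mul_distrib]
      exact Finset.prod_congr rfl fun j _ => h _ _ (Fin.succ_ne_zero j).symm
    simp only [Del_succ, Fin.prod_univ_succ, Finset.prod_mul_distrib]
    rw [h0]
    linear_combination (∏ j : Fin n, f (x 0 - x j.succ))
        * ((∏ j : Fin n, H 0 j.succ) * ∏ j : Fin n, H j.succ 0) * H 0 0 * ih'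

theorem Del_ne_zero {f : ℂ → ℂ} {n : ℕ} {x : Fin n → ℂ}
    (h : ∀ i j, i ≠ j → f (x i - x j) ≠ 0) : Del f x ≠ 0 := by
  unfold Del
  refine Finset.prod_ne_zero_iff.mpr fun i _ => Finset.prod_ne_zero_iff.mpr fun j hj => ?_
  exact h i j (Finset.mem_filter.mp hj).2.ne

/-- Elimination of the first column with pivot `M 0 0`. -/
theorem det_pivot {n : ℕ} (M : Matrix (Fin (n + 1)) (Fin (n + 1)) ℂ) (h : M 0 0 ≠ 0) :
    M.det = M 0 0 * (Matrix.of fun i j : Fin n =>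
      M i.succ j.succ - M i.succ 0 * M 0 j.succ / M 0 0).det := by
  let B : Matrix (Fin (n + 1)) (Fin (n + 1)) ℂ :=
    Fin.cons (M 0) (fun i j => M i.succ j - M i.succ 0 / M 0 0 * M 0 j)
  have hdet : M.det = B.det := by
    refine Matrix.det_eq_of_forall_row_eq_smul_add_const
      (Fin.cons 0 fun i : Fin n => M i.succ 0 / M 0 0) 0 rfl ?_
    intro i j
    refine Fin.cases ?_ (fun i => ?_) i
    · simp [B]
    · simp [B]
  rw [hdet, Matrix.det_succ_column_zero, Fin.sum_univ_succ, Finset.sum_eq_zero]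
  · simp only [Fin.val_zero, pow_zero, one_mul, add_zero]
    congr 1
    congr 1
    ext i j
    simp [B, Matrix.submatrix]
    ring
  · intro i _
    have : B i.succ 0 = 0 := by
      simp [B]
      field_simp
      simp
    rw [this]
    simp

/-- The Frobenius determinant: the elliptic form of Cauchy's determinant. -/
theorem frobenius_det (hb : IsBracket f) (n : ℕ) : ∀ (x y : Fin n → ℂ) (l : ℂ),
    (∀ i j, f (x i + y j) ≠ 0) → (∀ s : Finset (Fin n), f (l + ∑ i ∈ s, (x i + y i)) ≠ 0) →
    (Matrix.of fun i j => f (x i + y j + l) / (f (x i + y j) * f l)).det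
      = f (l + ((∑ i, x i) + ∑ i, y i)) / f l
        * (Del f x * Del f y / ∏ i, ∏ j, f (x i + y j)) := by
  induction n with
  | zero =>
    intro x y l _ hl
    have h0 : f l ≠ 0 := by simpa using hl ∅
    simp [Del, h0]
  | succ n ih =>
    intro x y l hxy hl
    have h0 : f l ≠ 0 := by simpa using hl ∅
    have h1 : f (x 0 + y 0 + l) ≠ 0 := by
      have := hl {0}
      rwa [Finset.sum_singleton, add_comm] at this
    have h1' : f (l + x 0 + y 0) ≠ 0 := by convert h1 using 2; ring
    rw [det_pivot _ (by simp [h0, h1, hxy])]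
    have hentry : (Matrix.of fun i j : Fin n =>
        (Matrix.of fun i j => f (x i + y j + l) / (f (x i + y j) * f l)) i.succ j.succ
        - (Matrix.of fun i j => f (x i + y j + l) / (f (x i + y j) * f l)) i.succ 0
          * (Matrix.of fun i j => f (x i + y j + l) / (f (x i + y j) * f l)) 0 j.succ
          / (Matrix.of fun i j => f (x i + y j + l) / (f (x i + y j) * f l)) 0 0)
        = Matrix.of fun i j : Fin n => (f (x 0 - x i.succ) / f (x i.succ + y 0))
          * (Matrix.of fun i j : Fin n => (f (y 0 - y j.succ) / f (x 0 + y j.succ))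
            * (Matrix.of fun i j : Fin n => f (x i.succ + y j.succ + (l + x 0 + y 0))
              / (f (x i.succ + y j.succ) * f (l + x 0 + y 0))) i j) i j := by
      ext i j
      simp only [Matrix.of_apply]
      have e1 := hxy i.succ j.succ
      have e2 := hxy i.succ 0
      have e3 := hxy 0 j.succ
      have e4 := hxy 0 0
      have hR := hb.riem ((x i.succ + y j.succ + x 0 + y 0 + 2 * l) / 2)
        ((x i.succ + y j.succ + x 0 + y 0) / 2)
        ((x i.succ - x 0 + y j.succ - y 0) / 2)
        ((x i.succ - x 0 - y j.succ + y 0) / 2)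
      rw [show l + x 0 + y 0 = x 0 + y 0 + l by ring]
      rw [show x 0 - x i.succ = -(x i.succ - x 0) by ring,
        show y 0 - y j.succ = -(y j.succ - y 0) by ring, hb.odd, hb.odd]
      have key : f (x i.succ + y j.succ + l) * f (x i.succ + y 0) * f (x 0 + y j.succ)
          * f (x 0 + y 0 + l) - f (x i.succ + y 0 + l) * f (x 0 + y j.succ + l) * f (x 0 + y 0)
          * f (x i.succ + y j.succ) = f (x i.succ - x 0) * f (y j.succ - y 0) * f l
          * f (x i.succ + y j.succ + (x 0 + y 0 + l)) := by
        ring_nf at hR ⊢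
        linear_combination -hR
      field_simp
      linear_combination key
    rw [hentry, Matrix.det_mul_column, Matrix.det_mul_row,
      ih (fun i => x i.succ) (fun i => y i.succ) (l + x 0 + y 0) (fun i j => hxy _ _) ?_]
    · simp only [Matrix.of_apply, Del_succ, Fin.sum_univ_succ, Fin.prod_univ_succ,
        Finset.prod_mul_distrib, Finset.prod_div_distrib]
      have e4 := hxy 0 0
      have p1 : ∏ i : Fin n, f (x i.succ + y 0) ≠ 0 :=
        Finset.prod_ne_zero_iff.mpr fun i _ => hxy _ _
      have p2 : ∏ i : Fin n, f (x 0 + y i.succ) ≠ 0 :=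
        Finset.prod_ne_zero_iff.mpr fun i _ => hxy _ _
      have p3 : ∏ i : Fin n, ∏ j : Fin n, f (x i.succ + y j.succ) ≠ 0 :=
        Finset.prod_ne_zero_iff.mpr fun i _ => Finset.prod_ne_zero_iff.mpr fun j _ => hxy _ _
      rw [show l + (x 0 + ∑ i : Fin n, x i.succ + (y 0 + ∑ i : Fin n, y i.succ))
        = l + x 0 + y 0 + (∑ i : Fin n, x i.succ + ∑ i : Fin n, y i.succ) by ring,
        show x 0 + y 0 + l = l + x 0 + y 0 by ring]
      field_simp
    · intro s
      have := hl (insert 0 (s.map (Fin.succEmb n)))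
      rw [Finset.sum_insert (by simp), Finset.sum_map] at this
      convert this using 2
      simp only [Fin.coe_succEmb]
      ring

/-- Expanding over permutations, replacing `N` rows of `A` by those of `B` in all ways gives the
same total as replacing `N` columns. -/
theorem sum_det_rows_eq_cols {n : ℕ} (A B : Matrix (Fin n) (Fin n) ℂ) (N : ℕ) :
    ∑ s ∈ powersetCard N (univ : Finset (Fin n)),
        (Matrix.of fun i j => if i ∈ s then B i j else A i j).det
      = ∑ s ∈ powersetCard N (univ : Finset (Fin n)),
        (Matrix.of fun i j => if j ∈ s then B i j else A i j).det := by
  simp only [Matrix.det_apply]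
  rw [Finset.sum_comm, Finset.sum_comm (s := powersetCard N univ)]
  refine Finset.sum_congr rfl fun σ _ => ?_
  symm
  refine Finset.sum_equiv (Equiv.finsetCongr σ) (fun s => ?_) (fun s _ => ?_)
  · simp [Finset.mem_powersetCard]
  · simp


/-- The weight of a subset `s` in the source identity: the factor by which the Cauchy-type product
`Δ(X + δ) Δ(Y) / ∏ [X_i + δ + Y_k]` changes when the variables `X_i + δ` with `i ∈ s` are lowered
to `X_i`. -/
noncomputable def subsetWeight (f : ℂ → ℂ) (δ : ℂ) {P Q : Type*} [Fintype P] [Fintype Q]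
    [DecidableEq P] (X : P → ℂ) (Y : Q → ℂ) (s : Finset P) : ℂ :=
  (∏ i, ∏ j, if i ∈ s ∧ j ∉ s then f (X i - X j - δ) / f (X i - X j) else 1)
    * ∏ i, ∏ k, if i ∈ s then f (X i + Y k + δ) / f (X i + Y k) else 1

/-- The Frobenius determinant in which the rows outside `s` are shifted by `δ`. Its dependence on
`s` beyond the cardinality is the weight of `s`. -/
theorem det_shift_rows (hb : IsBracket f) (δ : ℂ) {n : ℕ} (X Y : Fin n → ℂ)
    (hX : ∀ i j, i ≠ j → f (X i - X j) ≠ 0)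
    (hXY : ∀ i k, f (X i + Y k) ≠ 0) (hXY' : ∀ i k, f (X i + Y k + δ) ≠ 0) (l : ℂ)
    (s : Finset (Fin n))
    (hl : ∀ s' : Finset (Fin n),
      f (l + ∑ i ∈ s', (X i + (if i ∈ s then 0 else δ) + Y i)) ≠ 0) :
    (Matrix.of fun i j => if i ∈ s then f (X i + Y j + l) / (f (X i + Y j) * f l)
        else f (X i + Y j + δ + l) / (f (X i + Y j + δ) * f l)).det
      = f (l + ((∑ i, X i) + ((n : ℂ) - s.card) * δ + ∑ i, Y i)) / f l
        * (Del f X * Del f Y / ∏ i, ∏ j, f (X i + Y j + δ)) * subsetWeight f δ X Y s := by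
  have h := frobenius_det hb n (fun i => X i + if i ∈ s then 0 else δ) Y l ?_ hl
  swap
  · intro i j
    split_ifs
    · simpa using hXY i j
    · convert hXY' i j using 2; ring
  have hmat : (Matrix.of fun i j => if i ∈ s then f (X i + Y j + l) / (f (X i + Y j) * f l)
        else f (X i + Y j + δ + l) / (f (X i + Y j + δ) * f l))
      = Matrix.of fun i j => f (X i + (if i ∈ s then 0 else δ) + Y j + l)
        / (f (X i + (if i ∈ s then 0 else δ) + Y j) * f l) := by
    ext i j
    simp only [Matrix.of_apply]
    split_ifs
    · simp
    · rw [show X i + δ + Y j = X i + Y j + δ by ring]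
  rw [hmat, h]
  have hsum : ∑ i, (X i + if i ∈ s then 0 else δ) = (∑ i, X i) + ((n : ℂ) - s.card) * δ := by
    rw [Finset.sum_add_distrib]
    congr 1
    have : ∀ i, (if i ∈ s then 0 else δ) = δ - if i ∈ s then δ else 0 := by
      intro i; split_ifs <;> simp
    simp only [this, Finset.sum_sub_distrib, Finset.sum_ite_mem, Finset.univ_inter,
      Finset.sum_const, Finset.card_univ, Fintype.card_fin, nsmul_eq_mul]
    ring
  have hDel : Del f (fun i => X i + if i ∈ s then 0 else δ) = Del f X
      * ∏ i, ∏ j, if i ∈ s ∧ j ∉ s then f (X i - X j - δ) / f (X i - X j) else 1 := by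
    have := Del_eq_mul_prod f X (fun i => X i + if i ∈ s then 0 else δ)
      (fun i j => if i ∈ s ∧ j ∉ s then f (X i - X j - δ) / f (X i - X j) else 1) ?_
    · simpa using this
    · intro i j hij
      have hne := hX i j hij
      have hne' := hX j i hij.symm
      by_cases hi : i ∈ s <;> by_cases hj : j ∈ s <;> simp [hi, hj]
      · rw [mul_div_cancel₀ _ hne]
        congr 1
        ring
      · rw [← neg_sub (X j) (X i), hb.odd, ← neg_sub (X j) (X i + δ), hb.odd,
          show X j - (X i + δ) = X j - X i - δ by ring]
        field_simp
  have hprod : ∏ i, ∏ j, f (X i + (if i ∈ s then 0 else δ) + Y j)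
      = (∏ i, ∏ j, f (X i + Y j + δ))
        / ∏ i, ∏ k, if i ∈ s then f (X i + Y k + δ) / f (X i + Y k) else 1 := by
    rw [← Finset.prod_div_distrib]
    refine Finset.prod_congr rfl fun i _ => ?_
    rw [← Finset.prod_div_distrib]
    refine Finset.prod_congr rfl fun j _ => ?_
    have h1 := hXY i j
    have h2 := hXY' i j
    split_ifs
    · rw [add_zero]; field_simp
    · rw [div_one]; congr 1; ring
  rw [hsum, hDel, hprod, subsetWeight]
  simp only [div_eq_mul_inv, mul_inv, inv_inv]
  ring

/-- The source identity: subset sums over the `X`- and the `Y`-variables agree. -/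
theorem source_identity_fin (hb : IsBracket f) (δ : ℂ) {n : ℕ} (X Y : Fin n → ℂ)
    (hX : ∀ i j, i ≠ j → f (X i - X j) ≠ 0) (hY : ∀ i j, i ≠ j → f (Y i - Y j) ≠ 0)
    (hXY : ∀ i k, f (X i + Y k) ≠ 0) (hXY' : ∀ i k, f (X i + Y k + δ) ≠ 0) (N : ℕ) :
    ∑ s ∈ powersetCard N (univ : Finset (Fin n)), subsetWeight f δ X Y s
      = ∑ s ∈ powersetCard N (univ : Finset (Fin n)), subsetWeight f δ Y X s := by
  obtain ⟨l, hl⟩ := hb.exists_avoid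
    (ι := (Finset (Fin n) × Finset (Fin n)) ⊕ (Finset (Fin n) × Finset (Fin n)) ⊕ Unit)
    (Sum.elim (fun p => ∑ i ∈ p.2, (X i + (if i ∈ p.1 then 0 else δ) + Y i))
      (Sum.elim (fun p => ∑ i ∈ p.2, (Y i + (if i ∈ p.1 then 0 else δ) + X i))
        fun _ => (∑ i, X i) + ((n : ℂ) - N) * δ + ∑ i, Y i))
    (fun _ => 1) (fun _ => one_ne_zero)
  have hl1 : ∀ s s' : Finset (Fin n),
      f (l + ∑ i ∈ s', (X i + (if i ∈ s then 0 else δ) + Y i)) ≠ 0 := fun s s' => by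
    convert hl (Sum.inl (s, s')) using 2; simp; ring
  have hl2 : ∀ s s' : Finset (Fin n),
      f (l + ∑ i ∈ s', (Y i + (if i ∈ s then 0 else δ) + X i)) ≠ 0 := fun s s' => by
    convert hl (Sum.inr (Sum.inl (s, s'))) using 2; simp; ring
  have hl3 : f (l + ((∑ i, X i) + ((n : ℂ) - N) * δ + ∑ i, Y i)) ≠ 0 := by
    convert hl (Sum.inr (Sum.inr ())) using 2; simp; ring
  have h0 : f l ≠ 0 := by simpa using hl1 ∅ ∅
  have hrows := sum_det_rows_eq_cols
    (Matrix.of fun i j => f (X i + Y j + δ + l) / (f (X i + Y j + δ) * f l))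
    (Matrix.of fun i j => f (X i + Y j + l) / (f (X i + Y j) * f l)) N
  have hC : f (l + ((∑ i, X i) + ((n : ℂ) - N) * δ + ∑ i, Y i)) / f l
        * (Del f X * Del f Y / ∏ i, ∏ j, f (X i + Y j + δ)) ≠ 0 := by
    refine mul_ne_zero (div_ne_zero hl3 h0) (div_ne_zero (mul_ne_zero (Del_ne_zero hX)
      (Del_ne_zero hY)) ?_)
    exact Finset.prod_ne_zero_iff.mpr fun i _ => Finset.prod_ne_zero_iff.mpr fun j _ => hXY' i j
  refine mul_left_cancel₀ hC ?_
  rw [Finset.mul_sum, Finset.mul_sum]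
  refine Eq.trans (Finset.sum_congr rfl fun s hs => ?_) (hrows.trans
    (Finset.sum_congr rfl fun s hs => ?_))
  · have := det_shift_rows hb δ X Y hX hXY hXY' l s (hl1 s)
    rw [(Finset.mem_powersetCard.mp hs).2] at this
    simp only [Matrix.of_apply]
    exact this.symm
  · have := det_shift_rows hb δ Y X hY (fun i k => by rw [add_comm]; exact hXY k i)
      (fun i k => by rw [add_comm (Y i)]; exact hXY' k i) l s (hl2 s)
    rw [(Finset.mem_powersetCard.mp hs).2] at this
    rw [← Matrix.det_transpose]
    have hm : (Matrix.of fun i j : Fin n => if j ∈ s then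
        (Matrix.of fun i j => f (X i + Y j + l) / (f (X i + Y j) * f l)) i j else
        (Matrix.of fun i j => f (X i + Y j + δ + l) / (f (X i + Y j + δ) * f l)) i j).transpose
      = Matrix.of fun i j => if i ∈ s then f (Y i + X j + l) / (f (Y i + X j) * f l)
        else f (Y i + X j + δ + l) / (f (Y i + X j + δ) * f l) := by
      ext i j
      simp only [Matrix.transpose_apply, Matrix.of_apply, add_comm (Y i) (X j)]
    rw [hm, this, Finset.prod_comm]
    simp only [add_comm (Y _) (X _)]
    rw [show (∑ i, Y i) + ((n : ℂ) - N) * δ + ∑ i, X i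
      = (∑ i, X i) + ((n : ℂ) - N) * δ + ∑ i, Y i by ring, mul_comm (Del f Y)]

theorem sum_subsetWeight_reindex (f : ℂ → ℂ) (δ : ℂ) {P P' Q Q' : Type*} [Fintype P] [Fintype Q]
    [DecidableEq P] [Fintype P'] [Fintype Q'] [DecidableEq P'] (e : P' ≃ P) (e' : Q' ≃ Q)
    (X : P → ℂ) (Y : Q → ℂ) (N : ℕ) :
    ∑ s ∈ powersetCard N (univ : Finset P'), subsetWeight f δ (X ∘ e) (Y ∘ e') s
      = ∑ s ∈ powersetCard N (univ : Finset P), subsetWeight f δ X Y s := by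
  refine Finset.sum_equiv (Equiv.finsetCongr e) (fun s => ?_) (fun s _ => ?_)
  · simp [Finset.mem_powersetCard]
  · unfold subsetWeight
    congr 1
    · rw [← Equiv.prod_comp e]
      refine Finset.prod_congr rfl fun i _ => ?_
      rw [← Equiv.prod_comp e]
      simp
    · rw [← Equiv.prod_comp e]
      refine Finset.prod_congr rfl fun i _ => ?_
      rw [← Equiv.prod_comp e']
      simp

theorem source_identity (hb : IsBracket f) (δ : ℂ) {P Q : Type*} [Fintype P] [Fintype Q]
    [DecidableEq P] [DecidableEq Q] (hcard : Fintype.card P = Fintype.card Q)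
    (X : P → ℂ) (Y : Q → ℂ)
    (hX : ∀ i j, i ≠ j → f (X i - X j) ≠ 0) (hY : ∀ i j, i ≠ j → f (Y i - Y j) ≠ 0)
    (hXY : ∀ i k, f (X i + Y k) ≠ 0) (hXY' : ∀ i k, f (X i + Y k + δ) ≠ 0) (N : ℕ) :
    ∑ s ∈ powersetCard N (univ : Finset P), subsetWeight f δ X Y s
      = ∑ s ∈ powersetCard N (univ : Finset Q), subsetWeight f δ Y X s := by
  let e : Fin (Fintype.card P) ≃ P := (Fintype.equivFin P).symm
  let e' : Fin (Fintype.card P) ≃ Q := (Fintype.equivFinOfCardEq hcard.symm).symm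
  rw [← sum_subsetWeight_reindex f δ e e' X Y N, ← sum_subsetWeight_reindex f δ e' e Y X N]
  exact source_identity_fin hb δ _ _ (fun i j hij => hX _ _ (e.injective.ne hij))
    (fun i j hij => hY _ _ (e'.injective.ne hij)) (fun i k => hXY _ _) (fun i k => hXY' _ _) N

end Determinant

/-! ### Shifted factorials and duality at multiples of `δ` -/

section ShiftedFactorial

variable {f : ℂ → ℂ} {δ : ℂ}

theorem sf_zero (x : ℂ) : sf f δ x 0 = 1 := by simp [sf]

theorem sf_succ (x : ℂ) (k : ℕ) : sf f δ x (k + 1) = sf f δ x k * f (x + k * δ) := by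
  simp [sf, Finset.prod_range_succ]

theorem sf_add (x : ℂ) (k l : ℕ) : sf f δ x (k + l) = sf f δ x k * sf f δ (x + k * δ) l := by
  rw [sf, sf, sf, Finset.prod_range_add]
  congr 1
  refine Finset.prod_congr rfl fun i _ => ?_
  congr 1
  push_cast
  ring

theorem sf_ne_zero {x : ℂ} {k : ℕ} (h : ∀ i < k, f (x + i * δ) ≠ 0) : sf f δ x k ≠ 0 :=
  Finset.prod_ne_zero_iff.mpr fun i hi => h i (Finset.mem_range.mp hi)

theorem sf_eq_zero {x : ℂ} {k : ℕ} (i : ℕ) (hi : i < k) (h : f (x + i * δ) = 0) :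
    sf f δ x k = 0 :=
  Finset.prod_eq_zero (Finset.mem_range.mpr hi) h

/-- Reversal of the factors of a shifted factorial. -/
theorem sf_reverse (hb : IsBracket f) (x x' : ℂ) (k : ℕ) (hx : x' = δ - x - k * δ) :
    sf f δ x k = (-1) ^ k * sf f δ x' k := by
  subst hx
  rw [sf, sf, ← Finset.prod_range_reflect]
  have : ((-1 : ℂ)) ^ k = ∏ _i ∈ range k, (-1 : ℂ) := by simp
  rw [this, ← Finset.prod_mul_distrib]
  refine Finset.prod_congr rfl fun i hi => ?_
  have hi' := Finset.mem_range.mp hi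
  rw [neg_one_mul, ← hb.odd]
  congr 1
  rw [Nat.cast_sub (by omega), Nat.cast_sub (by omega)]
  push_cast
  ring

end ShiftedFactorial

section Duality

variable {f : ℂ → ℂ} {δ : ℂ} {ι κ : Type*} [Fintype ι] [Fintype κ]

/-- One summand of the symmetric form `dualSum` of the series `Φ_N`. -/
noncomputable def dualTerm (f : ℂ → ℂ) (δ : ℂ) (x a : ι → ℂ) (y b : κ → ℂ) (μ : ι → ℕ) : ℂ :=
  (∏ i, ∏ j, sf f δ (x i - x j + a j) (μ i) / sf f δ (x i - x j - μ j * δ) (μ i))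
    * ∏ i, ∏ k, sf f δ (x i + y k - b k) (μ i) / sf f δ (x i + y k) (μ i)

/-- The series `Φ_N` up to the sign `(-1)^N`: the difference products and the factors
`[x_i - x_j + δ]_{μ_i}` are combined into the denominators `[x_i - x_j - μ_j δ]_{μ_i}`. -/
noncomputable def dualSum (f : ℂ → ℂ) (δ : ℂ) [DecidableEq ι] (x a : ι → ℂ) (y b : κ → ℂ)
    (N : ℕ) : ℂ :=
  ∑ μ ∈ piAntidiag (univ : Finset ι) N, dualTerm f δ x a y b μ

theorem prod_range_ite_telescope (d : ℂ) (μ α : ℕ) (hμ : μ ≤ α)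
    (h : ∀ r : ℕ, μ ≤ r → f (d - r * δ) ≠ 0) :
    ∏ r ∈ range α, (if ¬ r < μ then f (d - r * δ - δ) / f (d - r * δ) else 1)
      = f (d - α * δ) / f (d - μ * δ) := by
  induction α, hμ using Nat.le_induction with
  | base =>
    rw [div_self (h μ le_rfl)]
    refine Finset.prod_eq_one fun r hr => ?_
    simp [Finset.mem_range.mp hr]
  | succ α hα ih =>
    rw [Finset.prod_range_succ, ih, if_pos (by omega)]
    have h1 := h α hα
    have h2 := h μ le_rfl
    field_simp
    congr 1
    push_cast
    ring_nf

theorem prod_range_telescope (d : ℂ) (β : ℕ) (h : ∀ r : ℕ, f (d + r * δ) ≠ 0) :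
    ∏ r ∈ range β, f (d + r * δ + δ) / f (d + r * δ) = f (d + β * δ) / f d := by
  induction β with
  | zero => simpa using (div_self (by simpa using h 0)).symm
  | succ β ih =>
    rw [Finset.prod_range_succ, ih]
    have h1 := h β
    have h2 : f d ≠ 0 := by simpa using h 0
    field_simp
    congr 1
    push_cast
    ring

theorem prod_fin_ite_lt (g : ℕ → ℂ) (μ α : ℕ) (hμ : μ ≤ α) :
    ∏ r : Fin α, (if (r : ℕ) < μ then g r else 1) = ∏ r ∈ range μ, g r := by
  rw [← Finset.prod_range (fun r => if r < μ then g r else 1), ← Finset.prod_filter]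
  congr 1
  ext r
  simp
  omega

/-- The strings `x i, x i + δ, …, x i + (α i - 1) δ`. -/
def strings (δ : ℂ) (x : ι → ℂ) (α : ι → ℕ) (p : Σ i, Fin (α i)) : ℂ := x p.1 + (p.2 : ℕ) * δ

/-- The union of the initial segments of lengths `μ i` of the strings. -/
def segments [DecidableEq ι] (α μ : ι → ℕ) : Finset (Σ i, Fin (α i)) :=
  univ.filter fun p => (p.2 : ℕ) < μ p.1

/-- For variables in strings, the weight of a union of initial segments telescopes to a summand of
the symmetric series. -/
theorem subsetWeight_segments [DecidableEq ι] (hδ : ∀ k : ℤ, k ≠ 0 → f ((k : ℂ) * δ) ≠ 0)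
    (x : ι → ℂ) (y : κ → ℂ)
    (hx : ∀ i j, i ≠ j → ∀ r : ℤ, f (x i - x j + r * δ) ≠ 0)
    (hxy : ∀ i k, ∀ r : ℤ, f (x i + y k + r * δ) ≠ 0)
    (α : ι → ℕ) (β : κ → ℕ) (μ : ι → ℕ) (hμ : ∀ i, μ i ≤ α i) :
    subsetWeight f δ (strings δ x α) (strings δ y β) (segments α μ)
      = dualTerm f δ x (fun i => -(α i * δ)) y (fun k => -(β k * δ)) μ := by
  unfold subsetWeight dualTerm
  congr 1
  · rw [Fintype.prod_sigma]
    refine Finset.prod_congr rfl fun i _ => ?_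
    simp only [Fintype.prod_sigma]
    rw [Finset.prod_comm]
    refine Finset.prod_congr rfl fun j _ => ?_
    have hinner : ∀ r : Fin (α i), (∏ r' : Fin (α j),
        if (⟨i, r⟩ : Σ i, Fin (α i)) ∈ segments α μ ∧ (⟨j, r'⟩ : Σ i, Fin (α i)) ∉ segments α μ
        then f (strings δ x α ⟨i, r⟩ - strings δ x α ⟨j, r'⟩ - δ)
          / f (strings δ x α ⟨i, r⟩ - strings δ x α ⟨j, r'⟩) else 1)
        = if (r : ℕ) < μ i then (fun r : ℕ => f (x i - x j + -(α j * δ) + r * δ)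
          / f (x i - x j - μ j * δ + r * δ)) r else 1 := by
      intro r
      simp only [segments, Finset.mem_filter, Finset.mem_univ, true_and, strings]
      split_ifs with hr
      · simp only [hr, true_and]
        have := prod_range_ite_telescope (f := f) (δ := δ) (x i - x j + (r : ℕ) * δ) (μ j) (α j)
          (hμ j) ?_
        · rw [Finset.prod_range] at this
          convert this using 2
          · refine if_congr Iff.rfl ?_ rfl
            congr 2 <;> ring
          · congr 1; ring
          · congr 1; ring
        · intro r' hr'
          by_cases hij : i = j
          · subst hij
            convert hδ ((r : ℕ) - (r' : ℕ) : ℤ) (by omega) using 2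
            push_cast
            ring
          · convert hx i j hij ((r : ℕ) - (r' : ℕ) : ℤ) using 2
            push_cast
            ring
      · simp [hr]
    rw [Finset.prod_congr rfl fun r _ => hinner r, prod_fin_ite_lt (fun r : ℕ => f (x i - x j + -(α j * δ) + r * δ)
          / f (x i - x j - μ j * δ + r * δ)) _ _ (hμ i),
      Finset.prod_div_distrib]
    rfl
  · rw [Fintype.prod_sigma]
    refine Finset.prod_congr rfl fun i _ => ?_
    simp only [Fintype.prod_sigma]
    rw [Finset.prod_comm]
    refine Finset.prod_congr rfl fun k _ => ?_
    have hinner : ∀ r : Fin (α i), (∏ r' : Fin (β k),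
        if (⟨i, r⟩ : Σ i, Fin (α i)) ∈ segments α μ
        then f (strings δ x α ⟨i, r⟩ + strings δ y β ⟨k, r'⟩ + δ)
          / f (strings δ x α ⟨i, r⟩ + strings δ y β ⟨k, r'⟩) else 1)
        = if (r : ℕ) < μ i then (fun r : ℕ => f (x i + y k - -(β k * δ) + r * δ)
          / f (x i + y k + r * δ)) r else 1 := by
      intro r
      simp only [segments, Finset.mem_filter, Finset.mem_univ, true_and, strings]
      split_ifs with hr
      · have := prod_range_telescope (f := f) (δ := δ) (x i + y k + (r : ℕ) * δ) (β k) ?_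
        · rw [Finset.prod_range] at this
          convert this using 2
          · congr 2 <;> ring
          · congr 1; ring
        · intro r'
          convert hxy i k ((r : ℕ) + (r' : ℕ) : ℤ) using 2
          push_cast
          ring
      · simp
    rw [Finset.prod_congr rfl fun r _ => hinner r, prod_fin_ite_lt (fun r : ℕ => f (x i + y k - -(β k * δ) + r * δ)
          / f (x i + y k + r * δ)) _ _ (hμ i),
      Finset.prod_div_distrib]
    rfl

/-- A subset of `Fin a` closed under passing to the predecessor is an initial segment. -/
theorem mem_iff_lt_card {a : ℕ} (t : Finset (Fin a))
    (ht : ∀ r : ℕ, ∀ h : r + 1 < a, (⟨r + 1, h⟩ : Fin a) ∈ t → (⟨r, by omega⟩ : Fin a) ∈ t)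
    (r : Fin a) : r ∈ t ↔ (r : ℕ) < t.card := by
  have hdown : ∀ r r' : Fin a, r ≤ r' → r' ∈ t → r ∈ t := by
    rintro ⟨r, hr⟩ ⟨r', hr'⟩ hle
    rw [Fin.mk_le_mk] at hle
    induction r', hle using Nat.le_induction with
    | base => exact id
    | succ n _ ih => exact fun h => ih (by omega) (ht n hr' h)
  constructor
  · intro hr
    have : Finset.Iic r ⊆ t := fun r' hr' => hdown _ _ (Finset.mem_Iic.mp hr') hr
    have := Finset.card_le_card this
    rw [Fin.card_Iic] at this
    omega
  · intro hr
    by_contra hn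
    have : t ⊆ Finset.Iio r := fun r' hr' => Finset.mem_Iio.mpr (by
      by_contra hle
      exact hn (hdown _ _ (not_lt.mp hle) hr'))
    have := Finset.card_le_card this
    rw [Fin.card_Iio] at this
    omega

theorem card_segments [DecidableEq ι] (α μ : ι → ℕ) (hμ : ∀ i, μ i ≤ α i) :
    (segments α μ).card = ∑ i, μ i := by
  rw [segments, Finset.card_filter, Fintype.sum_sigma]
  refine Finset.sum_congr rfl fun i _ => ?_
  rw [← Finset.sum_range (fun r => if r < μ i then 1 else 0), ← Finset.card_filter]
  have : (range (α i)).filter (fun r => r < μ i) = range (μ i) := by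
    ext r
    have := hμ i
    simp
    omega
  rw [this, Finset.card_range]

/-- A subset of the strings that is not a union of initial segments has weight zero, so the
symmetric series at nonpositive multiples of `δ` is the full sum over `N`-subsets. -/
theorem dualSum_eq_sum_subsetWeight [DecidableEq ι] (hb : IsBracket f)
    (hδ : ∀ k : ℤ, k ≠ 0 → f ((k : ℂ) * δ) ≠ 0) (x : ι → ℂ) (y : κ → ℂ)
    (hx : ∀ i j, i ≠ j → ∀ r : ℤ, f (x i - x j + r * δ) ≠ 0)
    (hxy : ∀ i k, ∀ r : ℤ, f (x i + y k + r * δ) ≠ 0)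
    (α : ι → ℕ) (β : κ → ℕ) (N : ℕ) :
    dualSum f δ x (fun i => -(α i * δ)) y (fun k => -(β k * δ)) N
      = ∑ s ∈ powersetCard N univ, subsetWeight f δ (strings δ x α) (strings δ y β) s := by
  have hle : ∀ μ, dualTerm f δ x (fun i => -(α i * δ)) y (fun k => -(β k * δ)) μ ≠ 0 →
      ∀ i, μ i ≤ α i := by
    intro μ hne i
    by_contra hlt
    refine hne ?_
    unfold dualTerm
    rw [Finset.prod_eq_zero (Finset.mem_univ i), zero_mul]
    rw [Finset.prod_eq_zero (Finset.mem_univ i)]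
    rw [sf_eq_zero (α i) (by omega), zero_div]
    rw [sub_self, zero_add, neg_add_cancel, hb.zero]
  refine Finset.sum_bij_ne_zero (fun μ _ _ => segments α μ) ?_ ?_ ?_ ?_
  · intro μ hμ hne
    rw [Finset.mem_powersetCard, card_segments α μ (hle μ hne)]
    exact ⟨Finset.subset_univ _, (Finset.mem_piAntidiag.mp hμ).1⟩
  · intro μ hμ hne μ' hμ' hne' heq
    have hmem : ∀ i, ∀ r : Fin (α i), (r : ℕ) < μ i ↔ (r : ℕ) < μ' i := by
      intro i r
      have : (⟨i, r⟩ : Σ i, Fin (α i)) ∈ segments α μ ↔ (⟨i, r⟩ : Σ i, Fin (α i)) ∈ segments α μ' := by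
        rw [heq]
      simpa [segments] using this
    funext i
    have h1 := hle μ hne i
    have h2 := hle μ' hne' i
    by_contra hne
    rcases lt_or_gt_of_ne hne with h | h
    · have := hmem i ⟨μ i, by omega⟩
      simp at this
      omega
    · have := hmem i ⟨μ' i, by omega⟩
      simp at this
      omega
  · intro s hs hne
    have hstep : ∀ i, ∀ r : ℕ, ∀ h : r + 1 < α i, (⟨i, ⟨r + 1, h⟩⟩ : Σ i, Fin (α i)) ∈ s →
        (⟨i, ⟨r, by omega⟩⟩ : Σ i, Fin (α i)) ∈ s := by
      intro i r h hin
      by_contra hout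
      refine hne ?_
      unfold subsetWeight
      rw [Finset.prod_eq_zero (Finset.mem_univ (⟨i, ⟨r + 1, h⟩⟩ : Σ i, Fin (α i))), zero_mul]
      rw [Finset.prod_eq_zero (Finset.mem_univ (⟨i, ⟨r, by omega⟩⟩ : Σ i, Fin (α i)))]
      rw [if_pos ⟨hin, hout⟩]
      have : strings δ x α ⟨i, ⟨r + 1, h⟩⟩ - strings δ x α ⟨i, ⟨r, by omega⟩⟩ - δ = 0 := by
        simp only [strings]
        push_cast
        ring
      rw [this, hb.zero, zero_div]
    let t : ∀ i, Finset (Fin (α i)) := fun i => univ.filter fun r => (⟨i, r⟩ : Σ i, Fin (α i)) ∈ s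
    have ht : ∀ i, ∀ r : Fin (α i), (⟨i, r⟩ : Σ i, Fin (α i)) ∈ s ↔ (r : ℕ) < (t i).card := by
      intro i r
      rw [← mem_iff_lt_card (t i) (fun r h => by simpa [t] using hstep i r h)]
      simp [t]
    have hseg : segments α (fun i => (t i).card) = s := by
      ext ⟨i, r⟩
      simp [segments, ht]
    have hcle : ∀ i, (t i).card ≤ α i := fun i => by
      simpa using Finset.card_le_univ (t i)
    refine ⟨fun i => (t i).card, ?_, ?_, hseg⟩
    · rw [Finset.mem_piAntidiag]
      refine ⟨?_, by simp⟩
      rw [← card_segments α _ hcle, hseg]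
      exact (Finset.mem_powersetCard.mp hs).2
    · rw [← subsetWeight_segments hδ x y hx hxy α β _ hcle, hseg]
      exact hne
  · intro μ hμ hne
    exact (subsetWeight_segments hδ x y hx hxy α β μ (hle μ hne)).symm

/-- Distinct points of the strings are separated, for generic starting points. -/
theorem strings_sub_ne_zero {ι : Type*} (hδ : ∀ k : ℤ, k ≠ 0 → f ((k : ℂ) * δ) ≠ 0)
    (x : ι → ℂ) (hx : ∀ i j, i ≠ j → ∀ r : ℤ, f (x i - x j + r * δ) ≠ 0) (α : ι → ℕ)
    (p q : Σ i, Fin (α i)) (hpq : p ≠ q) : f (strings δ x α p - strings δ x α q) ≠ 0 := by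
  obtain ⟨i, r⟩ := p
  obtain ⟨j, r'⟩ := q
  simp only [strings]
  by_cases hij : i = j
  · subst hij
    have hr : (r : ℕ) ≠ r' := fun h => hpq (by rw [Fin.ext h])
    convert hδ ((r : ℕ) - (r' : ℕ) : ℤ) (by omega) using 2
    push_cast
    ring
  · convert hx i j hij ((r : ℕ) - (r' : ℕ) : ℤ) using 2
    push_cast
    ring

/-- Duality when all the parameters are nonpositive multiples of `δ`: the source identity for
variables arranged in strings. -/
theorem dualSum_comm_of_nat [DecidableEq ι] [DecidableEq κ] (hb : IsBracket f)
    (hδ : ∀ k : ℤ, k ≠ 0 → f ((k : ℂ) * δ) ≠ 0) (x : ι → ℂ) (y : κ → ℂ)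
    (hx : ∀ i j, i ≠ j → ∀ r : ℤ, f (x i - x j + r * δ) ≠ 0)
    (hy : ∀ i j, i ≠ j → ∀ r : ℤ, f (y i - y j + r * δ) ≠ 0)
    (hxy : ∀ i k, ∀ r : ℤ, f (x i + y k + r * δ) ≠ 0)
    (α : ι → ℕ) (β : κ → ℕ) (hsum : ∑ i, α i = ∑ k, β k) (N : ℕ) :
    dualSum f δ x (fun i => -(α i * δ)) y (fun k => -(β k * δ)) N
      = dualSum f δ y (fun k => -(β k * δ)) x (fun i => -(α i * δ)) N := by
  rw [dualSum_eq_sum_subsetWeight hb hδ x y hx hxy,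
    dualSum_eq_sum_subsetWeight hb hδ y x hy (fun i k r => by rw [add_comm (y i)]; exact hxy k i r)]
  refine source_identity hb δ (by simpa using hsum) _ _ (strings_sub_ne_zero hδ x hx α)
    (strings_sub_ne_zero hδ y hy β) ?_ ?_ N
  · rintro ⟨i, r⟩ ⟨k, r'⟩
    convert hxy i k ((r : ℕ) + (r' : ℕ) : ℤ) using 2
    simp only [strings]
    push_cast
    ring
  · rintro ⟨i, r⟩ ⟨k, r'⟩
    convert hxy i k ((r : ℕ) + (r' : ℕ) + 1 : ℤ) using 2
    simp only [strings]
    push_cast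
    ring

end Duality

/-! ### Duality by interpolation -/

section Interpolation

variable {f : ℂ → ℂ} {δ : ℂ} {ι κ : Type*} [Fintype ι] [Fintype κ]

/-- `F` is a constant multiple of a product of `M` brackets `[z - w]` whose zeros `w` add up
to `τ`. -/
def IsThetaProd (f : ℂ → ℂ) (M : ℕ) (τ : ℂ) (F : ℂ → ℂ) : Prop :=
  ∃ (C : ℂ) (W : Multiset ℂ), W.card = M ∧ W.sum = τ ∧ ∀ z, F z = C * thetaGen f W z

theorem IsThetaProd.mem {M : ℕ} {τ : ℂ} {F : ℂ → ℂ} (h : IsThetaProd f M τ F) :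
    F ∈ thetaSpace f M τ := by
  obtain ⟨C, W, rfl, rfl, hF⟩ := h
  have : F = C • thetaGen f W := funext hF
  rw [this]
  exact Submodule.smul_mem _ _ (thetaGen_mem W)

theorem isThetaProd_const (c : ℂ) : IsThetaProd f 0 0 (fun _ => c) :=
  ⟨c, 0, by simp, by simp, fun z => by simp [thetaGen]⟩

theorem IsThetaProd.mul {M M' : ℕ} {τ τ' : ℂ} {F F' : ℂ → ℂ} (h : IsThetaProd f M τ F)
    (h' : IsThetaProd f M' τ' F') : IsThetaProd f (M + M') (τ + τ') (fun z => F z * F' z) := by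
  obtain ⟨C, W, rfl, rfl, hF⟩ := h
  obtain ⟨C', W', rfl, rfl, hF'⟩ := h'
  refine ⟨C * C', W + W', by simp, by simp, fun z => ?_⟩
  simp only [hF, hF', thetaGen_add]
  ring

theorem IsThetaProd.div_const {M : ℕ} {τ : ℂ} {F : ℂ → ℂ} (h : IsThetaProd f M τ F) (c : ℂ) :
    IsThetaProd f M τ (fun z => F z / c) := by
  obtain ⟨C, W, rfl, rfl, hF⟩ := h
  refine ⟨C / c, W, rfl, rfl, fun z => ?_⟩
  simp only [hF]
  ring

theorem IsThetaProd.prod {σ : Type*} (s : Finset σ) {M : σ → ℕ} {τ : σ → ℂ} {F : σ → ℂ → ℂ}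
    (h : ∀ i ∈ s, IsThetaProd f (M i) (τ i) (F i)) :
    IsThetaProd f (∑ i ∈ s, M i) (∑ i ∈ s, τ i) (fun z => ∏ i ∈ s, F i z) := by
  classical
  induction s using Finset.induction_on with
  | empty => simpa using isThetaProd_const (f := f) 1
  | insert i s hi ih =>
    simp only [Finset.sum_insert hi, Finset.prod_insert hi]
    exact (h i (Finset.mem_insert_self i s)).mul
      (ih fun j hj => h j (Finset.mem_insert_of_mem hj))

theorem isThetaProd_sf_add (c : ℂ) (k : ℕ) :
    IsThetaProd f k (-(k * c) - (∑ r ∈ range k, (r : ℂ)) * δ) (fun z => sf f δ (c + z) k) := by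
  have h : ∀ r ∈ range k, IsThetaProd f 1 (-(c + r * δ)) (fun z => f (c + z + r * δ)) := by
    intro r _
    refine ⟨1, {-(c + r * δ)}, by simp, by simp, fun z => ?_⟩
    simp only [thetaGen, Multiset.map_singleton, Multiset.prod_singleton, one_mul]
    congr 1
    ring
  have := IsThetaProd.prod (range k) h
  convert this using 1
  · simp
  · simp only [Finset.sum_neg_distrib, Finset.sum_add_distrib, Finset.sum_mul, Finset.sum_const,
      Finset.card_range, nsmul_eq_mul]
    ring
  · rfl

theorem isThetaProd_sf_sub (hb : IsBracket f) (c : ℂ) (k : ℕ) :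
    IsThetaProd f k (k * c + (∑ r ∈ range k, (r : ℂ)) * δ) (fun z => sf f δ (c - z) k) := by
  have h : ∀ r ∈ range k, IsThetaProd f 1 (c + r * δ) (fun z => f (c - z + r * δ)) := by
    intro r _
    refine ⟨-1, {c + r * δ}, by simp, by simp, fun z => ?_⟩
    simp only [thetaGen, Multiset.map_singleton, Multiset.prod_singleton, neg_one_mul]
    rw [← hb.odd]
    congr 1
    ring
  have := IsThetaProd.prod (range k) h
  convert this using 1
  · simp
  · simp only [Finset.sum_add_distrib, Finset.sum_mul, Finset.sum_const,
      Finset.card_range, nsmul_eq_mul]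
  · rfl

/-- As a function of `z`, the summand with `a_j = z + e` and `b_l = z + e'` is a theta product of
degree `2|μ|`, whose characteristic is symmetric under the exchange of the two sides. -/
theorem isThetaProd_dualTerm [DecidableEq ι] [DecidableEq κ] (hb : IsBracket f) (x a : ι → ℂ)
    (y b : κ → ℂ) (j : ι) (l : κ) (e e' : ℂ) (μ : ι → ℕ) (N : ℕ) (hμ : ∑ i, μ i = N) :
    IsThetaProd f (2 * N) (N * (x j + y l - e - e'))
      (fun z => dualTerm f δ x (Function.update a j (z + e)) y (Function.update b l (z + e')) μ) := by
  have h1 : ∀ i ∈ (univ : Finset ι), IsThetaProd f (∑ j', if j' = j then μ i else 0)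
      (∑ j', if j' = j then -(μ i * (x i - x j + e)) - (∑ r ∈ range (μ i), (r : ℂ)) * δ else 0)
      (fun z => ∏ j', sf f δ (x i - x j' + Function.update a j (z + e) j') (μ i)
        / sf f δ (x i - x j' - μ j' * δ) (μ i)) := by
    intro i _
    refine IsThetaProd.prod univ fun j' _ => ?_
    by_cases hj : j' = j
    · subst hj
      simp only [if_true, Function.update_self]
      refine IsThetaProd.div_const ?_ _
      convert isThetaProd_sf_add (f := f) (δ := δ) (x i - x j' + e) (μ i) using 3
      ring
    · simp only [hj, if_false, Function.update_of_ne, ne_eq, not_false_eq_true]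
      exact isThetaProd_const _
  have h2 : ∀ i ∈ (univ : Finset ι), IsThetaProd f (∑ l', if l' = l then μ i else 0)
      (∑ l', if l' = l then μ i * (x i + y l - e') + (∑ r ∈ range (μ i), (r : ℂ)) * δ else 0)
      (fun z => ∏ l', sf f δ (x i + y l' - Function.update b l (z + e') l') (μ i)
        / sf f δ (x i + y l') (μ i)) := by
    intro i _
    refine IsThetaProd.prod univ fun l' _ => ?_
    by_cases hl : l' = l
    · subst hl
      simp only [if_true, Function.update_self]
      refine IsThetaProd.div_const ?_ _
      convert isThetaProd_sf_sub (δ := δ) hb (x i + y l' - e') (μ i) using 3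
      ring
    · simp only [hl, if_false, Function.update_of_ne, ne_eq, not_false_eq_true]
      exact isThetaProd_const _
  have := (IsThetaProd.prod univ h1).mul (IsThetaProd.prod univ h2)
  convert this using 1
  · simp only [Finset.sum_ite_eq', Finset.mem_univ, if_true, hμ]
    ring
  · simp only [Finset.sum_ite_eq', Finset.mem_univ, if_true]
    rw [← Finset.sum_add_distrib, ← hμ, Nat.cast_sum, Finset.sum_mul]
    refine Finset.sum_congr rfl fun i _ => ?_
    ring
  · rfl

/-- Interpolation in one pair of parameters `a_j`, `b_l` with fixed difference. -/
theorem dualSum_comm_of_points [DecidableEq ι] [DecidableEq κ] (hb : IsBracket f)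
    (hδ : ∀ k : ℤ, k ≠ 0 → f ((k : ℂ) * δ) ≠ 0) (x a : ι → ℂ) (y b : κ → ℂ) (j : ι) (l : κ)
    (N : ℕ) (α₀ : ℕ)
    (h : ∀ α : ℕ, α₀ ≤ α →
      dualSum f δ x (Function.update a j (-(α * δ))) y
          (Function.update b l (-(α * δ) + (b l - a j))) N
        = dualSum f δ y (Function.update b l (-(α * δ) + (b l - a j))) x
          (Function.update a j (-(α * δ))) N) :
    dualSum f δ x a y b N = dualSum f δ y b x a N := by
  set D : ℂ → ℂ := fun z =>
    dualSum f δ x (Function.update a j (z + 0)) y (Function.update b l (z + (b l - a j))) N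
      - dualSum f δ y (Function.update b l (z + (b l - a j))) x (Function.update a j (z + 0)) N
    with hD
  have hmem : D ∈ thetaSpace f (2 * N) (N * (x j + y l - 0 - (b l - a j))) := by
    have h1 : (fun z => dualSum f δ x (Function.update a j (z + 0)) y
        (Function.update b l (z + (b l - a j))) N)
        ∈ thetaSpace f (2 * N) (N * (x j + y l - 0 - (b l - a j))) := by
      have := Submodule.sum_mem (thetaSpace f (2 * N) (N * (x j + y l - 0 - (b l - a j))))
        fun μ (hμ : μ ∈ piAntidiag (univ : Finset ι) N) =>
          (isThetaProd_dualTerm (δ := δ) hb x a y b j l 0 (b l - a j) μ N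
            (Finset.mem_piAntidiag.mp hμ).1).mem
      convert this using 1
      funext z
      simp [dualSum]
    have h2 : (fun z => dualSum f δ y (Function.update b l (z + (b l - a j))) x
        (Function.update a j (z + 0)) N)
        ∈ thetaSpace f (2 * N) (N * (x j + y l - 0 - (b l - a j))) := by
      have := Submodule.sum_mem (thetaSpace f (2 * N) (N * (y l + x j - (b l - a j) - 0)))
        fun μ (hμ : μ ∈ piAntidiag (univ : Finset κ) N) =>
          (isThetaProd_dualTerm (δ := δ) hb y b x a l j (b l - a j) 0 μ N
            (Finset.mem_piAntidiag.mp hμ).1).mem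
      convert this using 1
      · congr 1
        ring
      · funext z
        simp [dualSum]
    exact Submodule.sub_mem _ h1 h2
  have h0 := thetaSpace_eq_zero hb _ _ D hmem (fun i => -(((α₀ + i : ℕ) : ℂ) * δ)) ?_ ?_
  · have := congrFun h0 (a j)
    simp only [hD, add_zero, add_sub_cancel, Function.update_eq_self, Pi.zero_apply] at this
    exact sub_eq_zero.mp this
  · intro i i' hii
    convert hδ ((i' : ℕ) - (i : ℕ) : ℤ) (by
      intro h0
      exact hii (Fin.ext (by omega))) using 2
    push_cast
    ring
  · intro i
    simp only [hD, add_zero]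
    rw [h _ (by omega), sub_self]

theorem sum_update [DecidableEq ι] (a : ι → ℂ) (j : ι) (w : ℂ) :
    ∑ i, Function.update a j w i = ∑ i, a i - a j + w := by
  rw [Finset.sum_update_of_mem (Finset.mem_univ j),
    Finset.sum_eq_add_sum_sdiff_singleton_of_mem (Finset.mem_univ j) a]
  ring

/-- **Duality** for `dualSum`, for generic `x`, `y` and arbitrary balanced `a`, `b`. -/
theorem dualSum_comm [DecidableEq ι] [DecidableEq κ] (hb : IsBracket f)
    (hδ : ∀ k : ℤ, k ≠ 0 → f ((k : ℂ) * δ) ≠ 0) (x : ι → ℂ) (y : κ → ℂ)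
    (hx : ∀ i j, i ≠ j → ∀ r : ℤ, f (x i - x j + r * δ) ≠ 0)
    (hy : ∀ i j, i ≠ j → ∀ r : ℤ, f (y i - y j + r * δ) ≠ 0)
    (hxy : ∀ i k, ∀ r : ℤ, f (x i + y k + r * δ) ≠ 0) (i₀ : ι) (k₀ : κ) (N : ℕ)
    (a : ι → ℂ) (b : κ → ℂ) (hab : ∑ i, a i = ∑ k, b k) :
    dualSum f δ x a y b N = dualSum f δ y b x a N := by
  have key : ∀ (L : Finset κ) (J : Finset ι) (a : ι → ℂ) (b : κ → ℂ), ∑ i, a i = ∑ k, b k →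
      (∀ i, i ∉ J → i ≠ i₀ → ∃ α : ℕ, a i = -(α * δ)) →
      (∀ k, k ∉ L → k ≠ k₀ → ∃ β : ℕ, b k = -(β * δ)) →
      dualSum f δ x a y b N = dualSum f δ y b x a N := by
    intro L
    induction L using Finset.induction_on with
    | empty =>
      intro J
      induction J using Finset.induction_on with
      | empty =>
        intro a b hab ha hb'
        have ha' : ∀ i, ∃ α : ℕ, i ≠ i₀ → a i = -(α * δ) := fun i => by
          by_cases hi : i = i₀
          · exact ⟨0, fun h => absurd hi h⟩
          · obtain ⟨α, hα⟩ := ha i (by simp) hi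
            exact ⟨α, fun _ => hα⟩
        have hb'' : ∀ k, ∃ β : ℕ, k ≠ k₀ → b k = -(β * δ) := fun k => by
          by_cases hk : k = k₀
          · exact ⟨0, fun h => absurd hk h⟩
          · obtain ⟨β, hβ⟩ := hb' k (by simp) hk
            exact ⟨β, fun _ => hβ⟩
        choose α hα using ha'
        choose β hβ using hb''
        set A := ∑ i ∈ univ \ {i₀}, α i with hA
        set B := ∑ k ∈ univ \ {k₀}, β k with hB
        have hsa : ∑ i, a i = a i₀ - A * δ := by
          rw [Finset.sum_eq_add_sum_sdiff_singleton_of_mem (Finset.mem_univ i₀) a,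
            Finset.sum_congr rfl fun i hi => hα i (by simpa using hi), hA]
          push_cast
          rw [Finset.sum_neg_distrib, Finset.sum_mul]
          ring
        have hsb : ∑ k, b k = b k₀ - B * δ := by
          rw [Finset.sum_eq_add_sum_sdiff_singleton_of_mem (Finset.mem_univ k₀) b,
            Finset.sum_congr rfl fun k hk => hβ k (by simpa using hk), hB]
          push_cast
          rw [Finset.sum_neg_distrib, Finset.sum_mul]
          ring
        refine dualSum_comm_of_points hb hδ x a y b i₀ k₀ N B fun γ hγ => ?_
        have e1 : Function.update a i₀ (-(γ * δ))
            = fun i => -((Function.update α i₀ γ i : ℕ) * δ) := by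
          funext i
          by_cases hi : i = i₀
          · subst hi
            simp
          · simp [hi, hα i hi]
        have e2 : Function.update b k₀ (-(γ * δ) + (b k₀ - a i₀))
            = fun k => -((Function.update β k₀ (γ + A - B) k : ℕ) * δ) := by
          funext k
          by_cases hk : k = k₀
          · subst hk
            have : b k - a i₀ = B * δ - A * δ := by linear_combination hsa - hsb - hab
            simp only [Function.update_self, this]
            rw [Nat.cast_sub (by omega)]
            push_cast
            ring
          · simp [hk, hβ k hk]
        rw [e1, e2]
        refine dualSum_comm_of_nat hb hδ x y hx hy hxy _ _ ?_ N
        rw [Finset.sum_update_of_mem (Finset.mem_univ i₀),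
          Finset.sum_update_of_mem (Finset.mem_univ k₀), ← hA, ← hB]
        omega
      | insert j J hj ih =>
        intro a b hab ha hb'
        refine dualSum_comm_of_points hb hδ x a y b j k₀ N 0 fun γ _ => ih _ _ ?_ ?_ ?_
        · rw [sum_update, sum_update, hab]
          ring
        · intro i hi hi0
          by_cases hij : i = j
          · subst hij
            exact ⟨γ, by simp⟩
          · rw [Function.update_of_ne hij]
            exact ha i (by simp [hij, hi]) hi0
        · intro k hk hk0
          rw [Function.update_of_ne hk0]
          exact hb' k hk hk0
    | insert l L hl ih =>
      intro J a b hab ha hb'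
      refine (dualSum_comm_of_points hb hδ y b x a l i₀ N 0 fun γ _ => (ih J _ _ ?_ ?_ ?_).symm).symm
      · rw [sum_update, sum_update, hab]
        ring
      · intro i hi hi0
        rw [Function.update_of_ne hi0]
        exact ha i hi hi0
      · intro k hk hk0
        by_cases hkl : k = l
        · subst hkl
          exact ⟨γ, by simp⟩
        · rw [Function.update_of_ne hkl]
          exact hb' k (by simp [hkl, hk]) hk0
  exact key univ univ a b hab (fun i hi => absurd (Finset.mem_univ i) hi)
    fun k hk => absurd (Finset.mem_univ k) hk

end Interpolation

/-! ### Terminating very well-poised series -/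

section Series

variable {f : ℂ → ℂ} {δ : ℂ} {m n : ℕ}

/-- The multi-indices `μ ∈ ℕ^m` with `|μ| ≤ N`. -/
def simplex (m N : ℕ) : Finset (Fin m → ℕ) :=
  (piAntidiag (univ : Finset (Fin (m + 1))) N).image Fin.tail

theorem mem_simplex {N : ℕ} {μ : Fin m → ℕ} : μ ∈ simplex m N ↔ ∑ i, μ i ≤ N := by
  simp only [simplex, Finset.mem_image, Finset.mem_piAntidiag]
  constructor
  · rintro ⟨ν, ⟨hν, -⟩, rfl⟩
    rw [Fin.sum_univ_succ] at hν
    simp only [Fin.tail]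
    omega
  · intro h
    refine ⟨Fin.cons (N - ∑ i, μ i) μ, ⟨?_, by simp⟩, Fin.tail_cons _ _⟩
    rw [Fin.sum_univ_succ]
    simp only [Fin.cons_zero, Fin.cons_succ]
    omega

theorem sum_piAntidiag_succ (N : ℕ) (g : (Fin (m + 1) → ℕ) → ℂ) :
    ∑ ν ∈ piAntidiag (univ : Finset (Fin (m + 1))) N, g ν
      = ∑ μ ∈ simplex m N, g (Fin.cons (N - ∑ i, μ i) μ) := by
  have hcons : ∀ ν ∈ piAntidiag (univ : Finset (Fin (m + 1))) N,
      Fin.cons (N - ∑ i, Fin.tail ν i) (Fin.tail ν) = ν := by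
    intro ν hν
    have h := (Finset.mem_piAntidiag.mp hν).1
    rw [Fin.sum_univ_succ] at h
    have : N - ∑ i, Fin.tail ν i = ν 0 := by
      simp only [Fin.tail]
      omega
    rw [this, Fin.cons_self_tail]
  rw [simplex, Finset.sum_image]
  · exact Finset.sum_congr rfl fun ν hν => by rw [hcons ν hν]
  · intro ν hν ν' hν' h
    rw [← hcons ν hν, ← hcons ν' hν', h]

/-- The terminating series is a sum over the simplex `|μ| ≤ N`. -/
theorem Evw_eq_sum (hb : IsBracket f) (a x : Fin m → ℂ) (s c₁ c₂ d₁ : ℂ) (u v : Fin n → ℂ)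
    (N : ℕ) :
    Evw f δ a x s (Fin.cons c₁ (Fin.cons c₂ u)) (Fin.cons d₁ (Fin.cons (-(N : ℂ) * δ) v))
      = ∑ μ ∈ simplex m N, Eterm f δ a x s (Fin.cons c₁ (Fin.cons c₂ u))
          (Fin.cons d₁ (Fin.cons (-(N : ℂ) * δ) v)) μ := by
  refine tsum_eq_sum fun μ hμ => ?_
  rw [mem_simplex, not_le] at hμ
  unfold Eterm
  refine mul_eq_zero_of_right _ (Finset.prod_eq_zero (Finset.mem_univ (1 : Fin (n + 2))) ?_)
  have h1 : (Fin.cons d₁ (Fin.cons (-(N : ℂ) * δ) v) : Fin (n + 2) → ℂ) 1 = -(N : ℂ) * δ := rfl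
  rw [h1, sf_eq_zero N hμ (by rw [neg_mul, neg_add_cancel, hb.zero]), zero_div, zero_mul]

theorem Evw_swap (a x : Fin m → ℂ) (s c₁ c₂ : ℂ) (u : Fin n → ℂ) (v : Fin (n + 2) → ℂ) :
    Evw f δ a x s (Fin.cons c₁ (Fin.cons c₂ u)) v
      = Evw f δ a x s (Fin.cons c₂ (Fin.cons c₁ u)) v := by
  unfold Evw
  refine tsum_congr fun μ => ?_
  unfold Eterm
  congr 1
  simp only [Fin.prod_univ_succ, Fin.cons_zero, Fin.cons_succ, Finset.prod_div_distrib]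
  simp only [div_eq_mul_inv]
  ring

theorem sf_sub_ratio (hb : IsBracket f) (p q : ℂ) (M N : ℕ) (hM : M ≤ N)
    (hp : sf f δ p N ≠ 0) (hq : sf f δ q N ≠ 0) :
    sf f δ (δ - p - N * δ) (N - M) / sf f δ (δ - q - N * δ) (N - M)
      = sf f δ p N / sf f δ q N * (sf f δ q M / sf f δ p M) := by
  obtain ⟨L, rfl⟩ := Nat.exists_eq_add_of_le hM
  rw [sf_reverse hb (δ - p - (M + L : ℕ) * δ) (p + M * δ) (M + L - M) (by
      rw [Nat.add_sub_cancel_left]; push_cast; ring),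
    sf_reverse hb (δ - q - (M + L : ℕ) * δ) (q + M * δ) (M + L - M) (by
      rw [Nat.add_sub_cancel_left]; push_cast; ring), Nat.add_sub_cancel_left]
  rw [sf_add] at hp hq ⊢
  rw [sf_add]
  have h1 := left_ne_zero_of_mul hp
  have h2 := left_ne_zero_of_mul hq
  have h3 := right_ne_zero_of_mul hp
  have h4 := right_ne_zero_of_mul hq
  have h5 : (-1 : ℂ) ^ L ≠ 0 := by simp
  field_simp

theorem sf_sub_ratio_zero (hb : IsBracket f) (hδ : ∀ k : ℤ, k ≠ 0 → f ((k : ℂ) * δ) ≠ 0)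
    (p : ℂ) (M N : ℕ) (hM : M ≤ N) (hp : sf f δ p N ≠ 0) :
    sf f δ (δ - p - N * δ) (N - M) / sf f δ (-((N - M : ℕ) * δ)) (N - M)
      = (-1) ^ M * (sf f δ p N / sf f δ δ N * (sf f δ (-(N : ℂ) * δ) M / sf f δ p M)) := by
  obtain ⟨L, rfl⟩ := Nat.exists_eq_add_of_le hM
  have e1 : sf f δ (-((M + L : ℕ) : ℂ) * δ) M * sf f δ (-((L : ℕ) * δ)) L
      = (-1) ^ (M + L) * sf f δ δ (M + L) := by
    rw [← sf_reverse hb (-((M + L : ℕ) : ℂ) * δ) δ (M + L) (by ring), sf_add]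
    congr 2
    push_cast
    ring
  rw [sf_reverse hb (δ - p - (M + L : ℕ) * δ) (p + M * δ) (M + L - M) (by
      rw [Nat.add_sub_cancel_left]; push_cast; ring), Nat.add_sub_cancel_left]
  have h6 : sf f δ (-((L : ℕ) * δ)) L ≠ 0 := by
    refine sf_ne_zero fun i hi => ?_
    convert hδ ((i : ℤ) - L) (by omega) using 2
    push_cast
    ring
  have h7 : sf f δ δ (M + L) ≠ 0 := by
    refine sf_ne_zero fun i hi => ?_
    convert hδ ((i : ℤ) + 1) (by omega) using 2
    push_cast
    ring
  rw [sf_add p] at hp ⊢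
  have h1 := left_ne_zero_of_mul hp
  have h3 := right_ne_zero_of_mul hp
  have e2 : sf f δ (-((M + L : ℕ) : ℂ) * δ) M
      = (-1) ^ (M + L) * sf f δ δ (M + L) / sf f δ (-((L : ℕ) * δ)) L :=
    eq_div_of_mul_eq h6 e1
  rw [e2]
  have h5 : ((-1 : ℂ) ^ M) ^ 2 = 1 := by rw [← pow_mul, mul_comm, pow_mul]; simp
  generalize sf f δ (-((L : ℕ) * δ)) L = S at h6 ⊢
  field_simp
  rw [pow_add]
  linear_combination (-(-1) ^ L) * h5

/-- Both sides of this identity are `[p]_{N+μ+1}`. -/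
theorem sf_rearrange (p : ℂ) (M N μ : ℕ) (hM : M ≤ N) :
    sf f δ (p + M * δ) μ * sf f δ (p + δ + (M + μ : ℕ) * δ) (N - M) * sf f δ p M
        * f (p + (M + μ : ℕ) * δ)
      = f p * sf f δ (p + δ) N * sf f δ (p + δ + N * δ) μ := by
  obtain ⟨L, rfl⟩ := Nat.exists_eq_add_of_le hM
  rw [Nat.add_sub_cancel_left]
  have h1 : sf f δ p (M + μ + 1 + L) = f p * sf f δ (p + δ) (M + L) * sf f δ (p + δ + (M + L : ℕ) * δ) μ := by
    rw [mul_assoc, ← sf_add, show M + μ + 1 + L = 1 + (M + L + μ) by ring, sf_add]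
    simp [sf]
  rw [← h1, sf_add, sf_succ, sf_add, show p + ((M + μ + 1 : ℕ) : ℂ) * δ = p + δ + (M + μ : ℕ) * δ by push_cast; ring]
  ring

theorem Del_ratio (hb : IsBracket f) (hδ : ∀ k : ℤ, k ≠ 0 → f ((k : ℂ) * δ) ≠ 0)
    (x : Fin m → ℂ) (hx : ∀ i j, i ≠ j → ∀ r : ℤ, f (x i - x j + r * δ) ≠ 0) (μ : Fin m → ℕ) :
    Del f (fun i => x i + (μ i : ℂ) * δ) / Del f x
      = (-1) ^ (∑ i, μ i) * ∏ i, ∏ j, sf f δ (x i - x j + δ) (μ i)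
          / sf f δ (x i - x j - μ j * δ) (μ i) := by
  have hden : ∀ i j, sf f δ (x i - x j - μ j * δ) (μ i) ≠ 0 := by
    intro i j
    refine sf_ne_zero fun r hr => ?_
    by_cases hij : i = j
    · subst hij
      convert hδ ((r : ℤ) - μ i) (by omega) using 2
      push_cast
      ring
    · convert hx i j hij ((r : ℤ) - μ j) using 2
      push_cast
      ring
  have key := Del_eq_mul_prod f x (fun i => x i + (μ i : ℂ) * δ)
    (fun i j => sf f δ (x i - x j + δ) (μ i) / sf f δ (x i - x j - μ j * δ) (μ i)) ?_
  · have hdiag : ∏ i, sf f δ (x i - x i + δ) (μ i) / sf f δ (x i - x i - μ i * δ) (μ i)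
        = (-1) ^ (∑ i, μ i) := by
      rw [← Finset.prod_pow_eq_pow_sum]
      refine Finset.prod_congr rfl fun i _ => ?_
      rw [div_eq_iff (hden i i)]
      exact sf_reverse hb _ _ _ (by ring)
    rw [hdiag] at key
    have hDel : Del f x ≠ 0 := Del_ne_zero fun i j hij => by simpa using hx i j hij 0
    have h5 : ((-1 : ℂ) ^ (∑ i, μ i)) ^ 2 = 1 := by rw [← pow_mul, mul_comm, pow_mul]; simp
    rw [div_eq_iff hDel]
    linear_combination (-1) ^ (∑ i, μ i) * key
      - Del f (fun i => x i + (μ i : ℂ) * δ) * h5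
  · intro i j hij
    have h1 := hden i j
    have h2 := hden j i
    have r1 : sf f δ (x j - x i + δ) (μ j)
        = (-1) ^ μ j * sf f δ (x i - x j - μ j * δ) (μ j) := sf_reverse hb _ _ _ (by ring)
    have r2 : sf f δ (x j - x i - μ i * δ) (μ j)
        = (-1) ^ μ j * sf f δ (x i - x j - μ j * δ + (μ i + 1 : ℕ) * δ) (μ j) :=
      sf_reverse hb _ _ _ (by push_cast; ring)
    have e1 : sf f δ (x i - x j - μ j * δ) (μ i + 1 + μ j)
        = sf f δ (x i - x j - μ j * δ) (μ i) * f (x i + μ i * δ - (x j + μ j * δ))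
          * sf f δ (x i - x j - μ j * δ + (μ i + 1 : ℕ) * δ) (μ j) := by
      rw [sf_add, sf_succ]
      congr 3
      ring
    have e2 : sf f δ (x i - x j - μ j * δ) (μ i + 1 + μ j)
        = sf f δ (x i - x j - μ j * δ) (μ j) * f (x i - x j) * sf f δ (x i - x j + δ) (μ i) := by
      rw [show μ i + 1 + μ j = μ j + 1 + μ i by ring, sf_add, sf_succ]
      congr 2
      · congr 1
        ring
      · push_cast
        ring
    rw [r2] at h2 ⊢
    have h3 := right_ne_zero_of_mul h2
    have h4 := left_ne_zero_of_mul h2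
    rw [r1]
    rw [e1] at e2
    generalize sf f δ (x i - x j - μ j * δ) (μ i) = S₁ at *
    generalize sf f δ (x i - x j - μ j * δ + (μ i + 1 : ℕ) * δ) (μ j) = S₂ at *
    generalize sf f δ (x i - x j - μ j * δ) (μ j) = S₃ at *
    generalize f (x i + μ i * δ - (x j + μ j * δ)) = S₄ at *
    generalize f (x i - x j) = S₅ at *
    field_simp
    linear_combination e2

end Series

/-! ### From the symmetric series to the very well-poised series -/

section Translation

variable {f : ℂ → ℂ} {δ : ℂ} {m n : ℕ}

/-- The factor relating the symmetric series to the very well-poised series. -/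
noncomputable def prefactor (f : ℂ → ℂ) (δ : ℂ) (a x : Fin m → ℂ) (s c₁ c₂ d₁ : ℂ)
    (u v : Fin n → ℂ) (N : ℕ) : ℂ :=
  sf f δ (δ + s - c₁) N / sf f δ δ N * (sf f δ (δ + s - c₂) N / sf f δ d₁ N)
    * (∏ j, sf f δ (δ + s + x j - a j) N / sf f δ (δ + s + x j) N)
    * ∏ k, sf f δ (δ + s - u k) N / sf f δ (v k) N

/-- The factors of the symmetric summand that combine the variable `x_j = p - s` with the extra
variable `-s - Nδ`. -/
theorem column_factor (hb : IsBracket f) (p q : ℂ) (M N μ : ℕ) (hM : M ≤ N)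
    (hp : ∀ r : ℤ, f (p + r * δ) ≠ 0) (hq : sf f δ q N ≠ 0) :
    sf f δ (δ - q - N * δ) (N - M) / sf f δ (δ - (p + δ + μ * δ) - N * δ) (N - M)
        / sf f δ (p + M * δ) μ
      = sf f δ q N / sf f δ (p + δ) N * (f (p + (M + μ : ℕ) * δ) / f p)
        * (sf f δ p M / sf f δ q M) / sf f δ (p + δ + N * δ) μ := by
  have hne : ∀ (c : ℤ) (k : ℕ), sf f δ (p + c * δ) k ≠ 0 := fun c k => by
    refine sf_ne_zero fun i _ => ?_
    convert hp (c + i) using 2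
    push_cast
    ring
  have key := sf_rearrange (f := f) (δ := δ) p M N μ hM
  have h1 : sf f δ (p + M * δ) μ ≠ 0 := by simpa using hne M μ
  have h2 : sf f δ (p + δ + (M + μ : ℕ) * δ) (N - M) ≠ 0 := by
    convert hne (M + μ + 1) (N - M) using 2
    push_cast
    ring
  have h3 : sf f δ p M ≠ 0 := by simpa using hne 0 M
  have h4 : sf f δ (p + δ) N ≠ 0 := by simpa using hne 1 N
  have h5 : sf f δ (p + δ + N * δ) μ ≠ 0 := by
    convert hne (N + 1) μ using 2
    push_cast
    ring
  have h6 : f p ≠ 0 := by simpa using hp 0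
  obtain ⟨L, rfl⟩ := Nat.exists_eq_add_of_le hM
  rw [Nat.add_sub_cancel_left] at *
  rw [sf_reverse hb (δ - q - (M + L : ℕ) * δ) (q + M * δ) L (by push_cast; ring),
    sf_reverse hb (δ - (p + δ + μ * δ) - (M + L : ℕ) * δ) (p + δ + (M + μ : ℕ) * δ) L
      (by push_cast; ring)]
  rw [sf_add q] at hq ⊢
  have h7 := left_ne_zero_of_mul hq
  have h8 := right_ne_zero_of_mul hq
  have h9 : (-1 : ℂ) ^ L ≠ 0 := by simp
  generalize sf f δ (p + M * δ) μ = S₁ at *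
  generalize sf f δ (p + δ + (M + μ : ℕ) * δ) L = S₂ at *
  generalize sf f δ p M = S₃ at *
  generalize sf f δ (p + δ) (M + L) = S₄ at *
  generalize sf f δ (p + δ + (M + L : ℕ) * δ) μ = S₅ at *
  generalize sf f δ (q + M * δ) L = S₆ at *
  generalize f (p + (M + μ : ℕ) * δ) = S₇ at *
  field_simp
  linear_combination -key

theorem assemble_factors {A B C R₁ R₂ F₁ F₂ T₁ T₂ V S a₁ a₂ a₃ a₄ p₁ p₂ p₃ q₁ q₂ q₃ q₄ r₁ r₂ r₃ r₄
    w₁ w₂ w₃ w₄ Q : ℂ} (h : A / B / C = R₁ / R₂ * (F₁ / F₂) * (T₁ / T₂) / V) (hQ : Q ≠ 0) :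
    S * (a₁ / a₂ * (a₃ / a₄)) * (A / B) * (p₁ / C * (p₂ / p₃))
        * (q₁ / q₂ * (q₃ / q₄) * (r₁ / r₂ * (r₃ / r₄)) * (w₁ / w₂ * (w₃ / w₄)))
      = a₁ / a₂ * (q₁ / q₂) * (R₁ / R₂) * (r₁ / r₂)
        * (S * (Q / p₃) * (F₁ / F₂) * (T₁ / T₂ * (p₂ / Q))
          * (q₃ / a₄ * (p₁ / w₂) * (a₃ / q₄ * (w₁ / V) * (r₃ / r₄ * (w₃ / w₄))))) := by
  have hQ' : Q * Q⁻¹ = 1 := mul_inv_cancel₀ hQ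
  have key : S * (a₁ / a₂ * (a₃ / a₄)) * (A / B) * (p₁ / C * (p₂ / p₃))
        * (q₁ / q₂ * (q₃ / q₄) * (r₁ / r₂ * (r₃ / r₄)) * (w₁ / w₂ * (w₃ / w₄)))
      = A / B / C * (S * (a₁ / a₂ * (a₃ / a₄)) * (p₁ * (p₂ / p₃))
        * (q₁ / q₂ * (q₃ / q₄) * (r₁ / r₂ * (r₃ / r₄)) * (w₁ / w₂ * (w₃ / w₄)))) := by ring
  rw [key, h, show S * (Q / p₃) * (F₁ / F₂) * (T₁ / T₂ * (p₂ / Q))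
    = Q * Q⁻¹ * (S * p₃⁻¹ * (F₁ / F₂) * (T₁ / T₂ * p₂)) by ring, hQ']
  ring

/-- Termwise translation: with the extra variable `-s - Nδ`, whose index is `N - |μ|`, the symmetric
summand is the very well-poised summand up to a factor independent of `μ`. -/
theorem dualTerm_cons (hb : IsBracket f) (hδ : ∀ k : ℤ, k ≠ 0 → f ((k : ℂ) * δ) ≠ 0)
    (a x : Fin m → ℂ) (s c₁ c₂ d₁ : ℂ) (u v : Fin n → ℂ) (N : ℕ)
    (hx : ∀ i j, i ≠ j → ∀ r : ℤ, f (x i - x j + r * δ) ≠ 0)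
    (hs : ∀ i, ∀ r : ℤ, f (x i + s + r * δ) ≠ 0)
    (ha : ∀ j, sf f δ (δ + s + x j - a j) N ≠ 0)
    (hc₁ : sf f δ (δ + s - c₁) N ≠ 0) (hc₂ : sf f δ (δ + s - c₂) N ≠ 0)
    (hu : ∀ k, sf f δ (δ + s - u k) N ≠ 0)
    (hd₁ : sf f δ d₁ N ≠ 0) (hv : ∀ k, sf f δ (v k) N ≠ 0)
    (μ : Fin m → ℕ) (hμ : ∑ i, μ i ≤ N) :
    dualTerm f δ (Fin.cons (-s - N * δ) x : Fin (m + 1) → ℂ) (Fin.cons (c₁ - s - N * δ) a)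
        (Fin.cons (δ + s - d₁) fun k => δ + s - v k : Fin (n + 1) → ℂ)
        (Fin.cons (δ + s - c₂ - d₁) fun k => δ + s - u k - v k)
        (Fin.cons (N - ∑ i, μ i) μ)
      = prefactor f δ a x s c₁ c₂ d₁ u v N
        * Eterm f δ a x s (Fin.cons c₁ (Fin.cons c₂ u))
            (Fin.cons d₁ (Fin.cons (-(N : ℂ) * δ) v)) μ := by
  unfold dualTerm Eterm prefactor
  rw [Del_ratio hb hδ x hx μ]
  set M := ∑ i, μ i with hMdef
  have hcast : ((N - M : ℕ) : ℂ) = N - M := Nat.cast_sub hμ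
  simp only [Fin.prod_univ_succ, Fin.cons_zero, Fin.cons_succ]
  -- the factors attached to the extra variable alone
  have e1 : sf f δ (-s - N * δ - (-s - N * δ) + (c₁ - s - N * δ)) (N - M)
      / sf f δ (-s - N * δ - (-s - N * δ) - (N - M : ℕ) * δ) (N - M)
      = (-1) ^ M * (sf f δ (δ + s - c₁) N / sf f δ δ N
          * (sf f δ (-(N : ℂ) * δ) M / sf f δ (δ + s - c₁) M)) := by
    rw [← sf_sub_ratio_zero hb hδ (δ + s - c₁) M N hμ hc₁]
    congr 2 <;> ring
  have e2 : sf f δ (-s - N * δ + (δ + s - d₁) - (δ + s - c₂ - d₁)) (N - M)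
      / sf f δ (-s - N * δ + (δ + s - d₁)) (N - M)
      = sf f δ (δ + s - c₂) N / sf f δ d₁ N * (sf f δ d₁ M / sf f δ (δ + s - c₂) M) := by
    rw [← sf_sub_ratio hb (δ + s - c₂) d₁ M N hμ hc₂ hd₁]
    congr 2 <;> ring
  have e3 : ∀ k, sf f δ (-s - N * δ + (δ + s - v k) - (δ + s - u k - v k)) (N - M)
      / sf f δ (-s - N * δ + (δ + s - v k)) (N - M)
      = sf f δ (δ + s - u k) N / sf f δ (v k) N
        * (sf f δ (v k) M / sf f δ (δ + s - u k) M) := by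
    intro k
    rw [← sf_sub_ratio hb (δ + s - u k) (v k) M N hμ (hu k) (hv k)]
    congr 2 <;> ring
  have e4 : ∀ j, sf f δ (-s - N * δ - x j + a j) (N - M)
      / sf f δ (-s - N * δ - x j - μ j * δ) (N - M)
      / sf f δ (x j - (-s - N * δ) - (N - M : ℕ) * δ) (μ j)
      = sf f δ (δ + s + x j - a j) N / sf f δ (δ + s + x j) N
        * (f (x j + s + ((M + μ j : ℕ) : ℂ) * δ) / f (x j + s))
        * (sf f δ (s + x j) M / sf f δ (δ + s + x j - a j) M)
        / sf f δ (x j + δ + s - -(N : ℂ) * δ) (μ j) := by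
    intro j
    have h := column_factor hb (x j + s) (δ + s + x j - a j) M N (μ j) hμ (hs j) (ha j)
    rw [hcast]
    convert h using 3
    all_goals first | (congr 1; ring1) | (congr 2; ring1) | (congr 3; ring1)
  have e5 : ∀ i, sf f δ (x i - (-s - N * δ) + (c₁ - s - N * δ)) (μ i) = sf f δ (x i + c₁) (μ i) :=
    fun i => by congr 1; ring
  have e6 : ∀ i, sf f δ (x i + (δ + s - d₁) - (δ + s - c₂ - d₁)) (μ i)
      / sf f δ (x i + (δ + s - d₁)) (μ i)
      = sf f δ (x i + c₂) (μ i) / sf f δ (x i + δ + s - d₁) (μ i) :=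
    fun i => by congr 2 <;> ring
  have e7 : ∀ i k, sf f δ (x i + (δ + s - v k) - (δ + s - u k - v k)) (μ i)
      / sf f δ (x i + (δ + s - v k)) (μ i)
      = sf f δ (x i + u k) (μ i) / sf f δ (x i + δ + s - v k) (μ i) :=
    fun i k => by congr 2 <;> ring
  have E4 := Finset.prod_congr (rfl : (univ : Finset (Fin m)) = univ) fun j _ => e4 j
  simp only [e1, e2, e3, e5, e6, e7]
  have hne : ∏ i, ∏ j, sf f δ (x i - x j + δ) (μ i) ≠ 0 := by
    refine Finset.prod_ne_zero_iff.mpr fun i _ => Finset.prod_ne_zero_iff.mpr fun j _ =>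
      sf_ne_zero fun r _ => ?_
    by_cases hij : i = j
    · subst hij
      convert hδ ((r : ℤ) + 1) (by omega) using 2
      push_cast
      ring
    · convert hx i j hij ((r : ℤ) + 1) using 2
      push_cast
      ring
  rw [Finset.prod_comm] at hne
  simp only [Finset.prod_mul_distrib, Finset.prod_div_distrib] at E4 ⊢
  rw [Finset.prod_comm (f := fun i j => sf f δ (x i - x j + δ) (μ i)),
    Finset.prod_comm (f := fun i j => sf f δ (x i - x j + a j) (μ i)),
    Finset.prod_comm (f := fun i k => sf f δ (x i + u k) (μ i)),
    Finset.prod_comm (f := fun i k => sf f δ (x i + δ + s - v k) (μ i))]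
  exact assemble_factors E4 hne

/-- The very well-poised series as the symmetric series with one extra variable on each side. -/
theorem dualSum_eq_Evw (hb : IsBracket f) (hδ : ∀ k : ℤ, k ≠ 0 → f ((k : ℂ) * δ) ≠ 0)
    (a x : Fin m → ℂ) (s c₁ c₂ d₁ : ℂ) (u v : Fin n → ℂ) (N : ℕ)
    (hx : ∀ i j, i ≠ j → ∀ r : ℤ, f (x i - x j + r * δ) ≠ 0)
    (hs : ∀ i, ∀ r : ℤ, f (x i + s + r * δ) ≠ 0)
    (ha : ∀ j, sf f δ (δ + s + x j - a j) N ≠ 0)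
    (hc₁ : sf f δ (δ + s - c₁) N ≠ 0) (hc₂ : sf f δ (δ + s - c₂) N ≠ 0)
    (hu : ∀ k, sf f δ (δ + s - u k) N ≠ 0)
    (hd₁ : sf f δ d₁ N ≠ 0) (hv : ∀ k, sf f δ (v k) N ≠ 0) :
    dualSum f δ (Fin.cons (-s - N * δ) x : Fin (m + 1) → ℂ) (Fin.cons (c₁ - s - N * δ) a)
        (Fin.cons (δ + s - d₁) fun k => δ + s - v k : Fin (n + 1) → ℂ)
        (Fin.cons (δ + s - c₂ - d₁) fun k => δ + s - u k - v k) N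
      = prefactor f δ a x s c₁ c₂ d₁ u v N
        * Evw f δ a x s (Fin.cons c₁ (Fin.cons c₂ u))
            (Fin.cons d₁ (Fin.cons (-(N : ℂ) * δ) v)) := by
  rw [Evw_eq_sum hb, Finset.mul_sum, dualSum, sum_piAntidiag_succ]
  exact Finset.sum_congr rfl fun μ hμ => dualTerm_cons hb hδ a x s c₁ c₂ d₁ u v N hx hs ha hc₁ hc₂
    hu hd₁ hv μ (mem_simplex.mp hμ)

end Translation

/-! ### The duality transformation for generic parameters -/

section Generic

variable {f : ℂ → ℂ} {δ : ℂ} {m n : ℕ}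

/-- The quotient of products of shifted factorials in the duality transformation. -/
noncomputable def dualFactor (f : ℂ → ℂ) (δ : ℂ) (N : ℕ) (a x : Fin m → ℂ) (s c₁ c₂ d₁ : ℂ)
    (u v : Fin n → ℂ) : ℂ :=
  (sf f δ (δ + s - c₁ - d₁) N * sf f δ (δ + s - c₂ - d₁) N
      / (sf f δ (δ + s - c₁) N * sf f δ (δ + s - c₂) N))
    * (∏ i, sf f δ (δ + s + x i) N * sf f δ (δ + s + x i - a i - d₁) N
        / (sf f δ (δ + s + x i - a i) N * sf f δ (δ + s + x i - d₁) N))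
    * (∏ k, sf f δ (v k) N * sf f δ (δ + s - u k - d₁) N
        / (sf f δ (δ + s - u k) N * sf f δ (v k - d₁) N))

/-- The factor of the dual series, with all shifted factorials reversed. -/
theorem prefactor_dual (hb : IsBracket f) (a x : Fin m → ℂ) (s c₁ c₂ d₁ t : ℂ)
    (u v : Fin n → ℂ) (N : ℕ) (ht : t = d₁ + -(N : ℂ) * δ - s - δ) :
    prefactor f δ (fun k => δ + s - u k - v k) (fun k => δ + s - v k) t (-c₂) (-c₁) d₁
        (fun i => x i - a i) (fun i => d₁ + -(N : ℂ) * δ - s - x i) N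
      = sf f δ (δ + s - c₂ - d₁) N / sf f δ δ N * (sf f δ (δ + s - c₁ - d₁) N / sf f δ d₁ N)
        * (∏ k, sf f δ (δ + s - u k - d₁) N / sf f δ (v k - d₁) N)
        * ∏ i, sf f δ (δ + s + x i - a i - d₁) N / sf f δ (δ + s + x i - d₁) N := by
  unfold prefactor
  have hsq : (-1 : ℂ) ^ N * (-1) ^ N = 1 := by rw [← mul_pow]; simp
  have hdiv : ∀ A B : ℂ, (-1) ^ N * A / ((-1) ^ N * B) = A / B := fun A B =>
    mul_div_mul_left _ _ (by simp)
  congr 1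
  · congr 1
    · rw [sf_reverse hb (δ + t - -c₂) (δ + s - c₂ - d₁) N (by rw [ht]; ring),
        sf_reverse hb (δ + t - -c₁) (δ + s - c₁ - d₁) N (by rw [ht]; ring)]
      linear_combination (sf f δ (δ + s - c₂ - d₁) N / sf f δ δ N
        * (sf f δ (δ + s - c₁ - d₁) N / sf f δ d₁ N)) * hsq
    · refine Finset.prod_congr rfl fun k _ => ?_
      rw [sf_reverse hb (δ + t + (δ + s - v k) - (δ + s - u k - v k)) (δ + s - u k - d₁) N
          (by rw [ht]; ring),
        sf_reverse hb (δ + t + (δ + s - v k)) (v k - d₁) N (by rw [ht]; ring), hdiv]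
  · refine Finset.prod_congr rfl fun i _ => ?_
    rw [sf_reverse hb (δ + t - (x i - a i)) (δ + s + x i - a i - d₁) N (by rw [ht]; ring),
      sf_reverse hb (d₁ + -(N : ℂ) * δ - s - x i) (δ + s + x i - d₁) N (by ring), hdiv]

theorem dualFactor_algebra {C₁ C₂ A X U V C₁' C₂' A' X' U' V' D E : ℂ} (h₁ : C₁ ≠ 0) (h₂ : C₂ ≠ 0)
    (hA : A ≠ 0) (hX : X ≠ 0) (hU : U ≠ 0) (hV : V ≠ 0) :
    C₂' / D * (C₁' / E) * (U' / V') * (A' / X')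
      = C₁ / D * (C₂ / E) * (A / X) * (U / V)
        * (C₁' * C₂' / (C₁ * C₂) * (X * A' / (A * X')) * (V * U' / (U * V'))) := by
  field_simp

/-- The duality transformation when `x`, `v`, `d₁` are generic. -/
theorem Evw_duality_generic (hb : IsBracket f) (hδ : ∀ k : ℤ, k ≠ 0 → f ((k : ℂ) * δ) ≠ 0)
    (a x : Fin m → ℂ) (s c₁ c₂ d₁ t : ℂ) (u v : Fin n → ℂ) (N : ℕ)
    (ht : t = d₁ + -(N : ℂ) * δ - s - δ)
    (hbal : (∑ i, a i) + (c₁ + c₂ + d₁ + -(N : ℂ) * δ) + (∑ k, (u k + v k)) =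
      ((n : ℂ) + 1) * δ + ((n : ℂ) + 2) * s)
    (hx : ∀ i j, i ≠ j → ∀ r : ℤ, f (x i - x j + r * δ) ≠ 0)
    (hs : ∀ i, ∀ r : ℤ, f (x i + s + r * δ) ≠ 0)
    (hd : ∀ r : ℤ, f (d₁ + r * δ) ≠ 0)
    (hv : ∀ k, ∀ r : ℤ, f (v k + r * δ) ≠ 0)
    (hvv : ∀ k k', k ≠ k' → ∀ r : ℤ, f (v k - v k' + r * δ) ≠ 0)
    (hvd : ∀ k, ∀ r : ℤ, f (v k - d₁ + r * δ) ≠ 0)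
    (hxv : ∀ i k, ∀ r : ℤ, f (x i + s - v k + r * δ) ≠ 0)
    (hxd : ∀ i, ∀ r : ℤ, f (x i + s - d₁ + r * δ) ≠ 0)
    (ha : ∀ j, sf f δ (δ + s + x j - a j) N ≠ 0)
    (hc₁ : sf f δ (δ + s - c₁) N ≠ 0) (hc₂ : sf f δ (δ + s - c₂) N ≠ 0)
    (hu : ∀ k, sf f δ (δ + s - u k) N ≠ 0)
    (hub : ∀ k, sf f δ (δ + t + (δ + s - v k) - (δ + s - u k - v k)) N ≠ 0)
    (htc₁ : sf f δ (δ + t - -c₁) N ≠ 0) (htc₂ : sf f δ (δ + t - -c₂) N ≠ 0)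
    (htz : ∀ i, sf f δ (δ + t - (x i - a i)) N ≠ 0) :
    Evw f δ a x s (Fin.cons c₁ (Fin.cons c₂ u)) (Fin.cons d₁ (Fin.cons (-(N : ℂ) * δ) v))
      = dualFactor f δ N a x s c₁ c₂ d₁ u v
        * Evw f δ (fun k => δ + s - u k - v k) (fun k => δ + s - v k) t
            (Fin.cons (-c₁) (Fin.cons (-c₂) fun i => x i - a i))
            (Fin.cons d₁ (Fin.cons (-(N : ℂ) * δ) fun i => d₁ + -(N : ℂ) * δ - s - x i)) := by
  have hodd : ∀ z : ℂ, f z ≠ 0 → f (-z) ≠ 0 := fun z hz => by rw [hb.odd]; exact neg_ne_zero.mpr hz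
  have hsfv : ∀ k, sf f δ (v k) N ≠ 0 := fun k =>
    sf_ne_zero fun i _ => by simpa using hv k i
  have hsfd : sf f δ d₁ N ≠ 0 := sf_ne_zero fun i _ => by simpa using hd i
  have hsfδ : sf f δ δ N ≠ 0 := sf_ne_zero fun i _ => by
    convert hδ (i + 1) (by omega) using 2
    push_cast
    ring
  have hsfx : ∀ i, sf f δ (δ + s + x i) N ≠ 0 := fun i => sf_ne_zero fun r _ => by
    convert hs i (r + 1) using 2
    push_cast
    ring
  have h1 := dualSum_eq_Evw hb hδ a x s c₁ c₂ d₁ u v N hx hs ha hc₁ hc₂ hu hsfd hsfv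
  have h2 := dualSum_eq_Evw hb hδ (fun k => δ + s - u k - v k) (fun k => δ + s - v k) t (-c₂) (-c₁)
    d₁ (fun i => x i - a i) (fun i => d₁ + -(N : ℂ) * δ - s - x i) N
    (fun k k' hk r => by
      convert hvv k' k hk.symm r using 2
      ring)
    (fun k r => by
      convert hodd _ (hvd k (N - r)) using 2
      rw [ht]
      push_cast
      ring) hub htc₂ htc₁ htz hsfd
    (fun i => sf_ne_zero fun r _ => by
      convert hodd _ (hxd i (N - r)) using 2
      push_cast
      ring)
  have e1 : (Fin.cons (-t - N * δ) fun k => δ + s - v k : Fin (n + 1) → ℂ)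
      = Fin.cons (δ + s - d₁) fun k => δ + s - v k := by
    congr 1
    rw [ht]
    ring
  have e2 : (Fin.cons (-c₂ - t - N * δ) fun k => δ + s - u k - v k : Fin (n + 1) → ℂ)
      = Fin.cons (δ + s - c₂ - d₁) fun k => δ + s - u k - v k := by
    congr 1
    rw [ht]
    ring
  have e3 : (Fin.cons (δ + t - d₁) fun i => δ + t - (d₁ + -(N : ℂ) * δ - s - x i) :
      Fin (m + 1) → ℂ) = Fin.cons (-s - N * δ) x := by
    congr 1
    · rw [ht]
      ring
    · funext i
      rw [ht]
      ring
  have e4 : (Fin.cons (δ + t - -c₁ - d₁) fun i => δ + t - (x i - a i)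
      - (d₁ + -(N : ℂ) * δ - s - x i) : Fin (m + 1) → ℂ) = Fin.cons (c₁ - s - N * δ) a := by
    congr 1
    · rw [ht]
      ring
    · funext i
      rw [ht]
      ring
  rw [e1, e2, e3, e4] at h2
  have hcomm := dualSum_comm hb hδ (Fin.cons (-s - N * δ) x : Fin (m + 1) → ℂ)
    (Fin.cons (δ + s - d₁) fun k => δ + s - v k : Fin (n + 1) → ℂ) ?_ ?_ ?_ 0 0 N
    (Fin.cons (c₁ - s - N * δ) a) (Fin.cons (δ + s - c₂ - d₁) fun k => δ + s - u k - v k) ?_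
  · rw [h1, h2, prefactor_dual hb a x s c₁ c₂ d₁ t u v N ht,
      Evw_swap _ _ t (-c₂)] at hcomm
    have hpre : prefactor f δ a x s c₁ c₂ d₁ u v N ≠ 0 := by
      unfold prefactor
      refine mul_ne_zero (mul_ne_zero (mul_ne_zero (div_ne_zero hc₁ hsfδ) (div_ne_zero hc₂ hsfd))
        (Finset.prod_ne_zero_iff.mpr fun j _ => div_ne_zero (ha j) (hsfx j)))
        (Finset.prod_ne_zero_iff.mpr fun k _ => div_ne_zero (hu k) (hsfv k))
    refine mul_left_cancel₀ hpre ?_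
    rw [hcomm, ← mul_assoc]
    congr 1
    unfold prefactor dualFactor
    simp only [Finset.prod_mul_distrib, Finset.prod_div_distrib]
    exact dualFactor_algebra hc₁ hc₂ (Finset.prod_ne_zero_iff.mpr fun j _ => ha j)
      (Finset.prod_ne_zero_iff.mpr fun j _ => hsfx j)
      (Finset.prod_ne_zero_iff.mpr fun k _ => hu k)
      (Finset.prod_ne_zero_iff.mpr fun k _ => hsfv k)
  · refine Fin.cases (Fin.cases (fun h => absurd rfl h) fun j _ r => ?_)
      fun i => Fin.cases (fun _ r => ?_) fun j hij r => ?_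
    · simp only [Fin.cons_zero, Fin.cons_succ]
      convert hodd _ (hs j (N - r)) using 2
      push_cast
      ring
    · simp only [Fin.cons_zero, Fin.cons_succ]
      convert hs i (N + r) using 2
      push_cast
      ring
    · simp only [Fin.cons_succ]
      exact hx i j (fun h => hij (by rw [h])) r
  · refine Fin.cases (Fin.cases (fun h => absurd rfl h) fun j _ r => ?_)
      fun i => Fin.cases (fun _ r => ?_) fun j hij r => ?_
    · simp only [Fin.cons_zero, Fin.cons_succ]
      convert hvd j r using 2
      ring
    · simp only [Fin.cons_zero, Fin.cons_succ]
      convert hodd _ (hvd i (-r)) using 2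
      push_cast
      ring
    · simp only [Fin.cons_succ]
      convert hvv j i (fun h => hij (by rw [h])) r using 2
      ring
  · refine Fin.cases (Fin.cases (fun r => ?_) fun j r => ?_)
      fun i => Fin.cases (fun r => ?_) fun j r => ?_
    · simp only [Fin.cons_zero]
      convert hodd _ (hd (N - 1 - r)) using 2
      push_cast
      ring
    · simp only [Fin.cons_zero, Fin.cons_succ]
      convert hodd _ (hv j (N - 1 - r)) using 2
      push_cast
      ring
    · simp only [Fin.cons_zero, Fin.cons_succ]
      convert hxd i (r + 1) using 2
      push_cast
      ring
    · simp only [Fin.cons_succ]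
      convert hxv i j (r + 1) using 2
      push_cast
      ring
  · simp only [Fin.sum_univ_succ, Fin.cons_zero, Fin.cons_succ, Finset.sum_sub_distrib,
      Finset.sum_add_distrib, Finset.sum_const, Finset.card_univ, Fintype.card_fin,
      nsmul_eq_mul] at hbal ⊢
    linear_combination hbal

end Generic

/-! ### Removing genericity -/

section Limit

variable {f : ℂ → ℂ} {δ : ℂ} {m n : ℕ}

theorem sf_ne_zero_of_le {p : ℂ} {M N : ℕ} (hM : M ≤ N) (h : sf f δ p N ≠ 0) :
    sf f δ p M ≠ 0 := by
  obtain ⟨L, rfl⟩ := Nat.exists_eq_add_of_le hM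
  rw [sf_add] at h
  exact left_ne_zero_of_mul h

theorem continuous_sf (hf : Continuous f) {g : ℂ → ℂ} (hg : Continuous g) (k : ℕ) :
    Continuous fun ε => sf f δ (g ε) k := by
  unfold sf
  exact continuous_finsetProd _ fun i _ => hf.comp (hg.add continuous_const)

theorem continuous_Del (hf : Continuous f) {x : ℂ → Fin m → ℂ} (hx : Continuous x) :
    Continuous fun ε => Del f (x ε) := by
  unfold Del
  exact continuous_finsetProd _ fun i _ => continuous_finsetProd _ fun j _ =>
    hf.comp (((continuous_apply i).comp hx).sub ((continuous_apply j).comp hx))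

theorem continuousAt_Eterm (hf : Continuous f) {a x : ℂ → Fin m → ℂ} {s : ℂ → ℂ}
    {u v : ℂ → Fin n → ℂ} (ha : Continuous a) (hx : Continuous x) (hs : Continuous s)
    (hu : Continuous u) (hv : Continuous v) (N : ℕ)
    (h1 : ∀ i j, i ≠ j → f (x 0 i - x 0 j) ≠ 0) (h2 : ∀ i, f (x 0 i + s 0) ≠ 0)
    (h3 : ∀ j, sf f δ (δ + s 0 + x 0 j - a 0 j) N ≠ 0)
    (h4 : ∀ i j, sf f δ (x 0 i - x 0 j + δ) N ≠ 0)
    (h5 : ∀ k, sf f δ (δ + s 0 - u 0 k) N ≠ 0)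
    (h6 : ∀ i k, sf f δ (x 0 i + δ + s 0 - v 0 k) N ≠ 0) (μ : Fin m → ℕ) (hμ : ∑ i, μ i ≤ N) :
    ContinuousAt (fun ε => Eterm f δ (a ε) (x ε) (s ε) (u ε) (v ε) μ) 0 := by
  have hμi : ∀ i, μ i ≤ N := fun i =>
    (Finset.single_le_sum (fun j _ => Nat.zero_le (μ j)) (Finset.mem_univ i)).trans hμ
  have ha' : ∀ i, Continuous fun ε => a ε i := fun i => (continuous_apply i).comp ha
  have hx' : ∀ i, Continuous fun ε => x ε i := fun i => (continuous_apply i).comp hx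
  have hu' : ∀ i, Continuous fun ε => u ε i := fun i => (continuous_apply i).comp hu
  have hv' : ∀ i, Continuous fun ε => v ε i := fun i => (continuous_apply i).comp hv
  unfold Eterm
  refine ((ContinuousAt.mul ?_ ?_).mul ?_).mul ?_
  · refine ContinuousAt.div (continuous_Del hf ?_).continuousAt (continuous_Del hf hx).continuousAt
      (Del_ne_zero h1)
    exact continuous_pi fun i => (hx' i).add continuous_const
  · refine tendsto_finsetProd _ fun i _ => ContinuousAt.div ?_ ?_ (h2 i)
    · exact (hf.comp (((hx' i).add hs).add continuous_const)).continuousAt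
    · exact (hf.comp ((hx' i).add hs)).continuousAt
  · refine tendsto_finsetProd _ fun j _ => ContinuousAt.mul ?_ ?_
    · refine ContinuousAt.div (continuous_sf hf ?_ _).continuousAt
        (continuous_sf hf ?_ _).continuousAt (sf_ne_zero_of_le hμ (h3 j))
      · exact hs.add (hx' j)
      · exact ((continuous_const.add hs).add (hx' j)).sub (ha' j)
    · refine tendsto_finsetProd _ fun i _ => ContinuousAt.div (continuous_sf hf ?_ _).continuousAt
        (continuous_sf hf ?_ _).continuousAt (sf_ne_zero_of_le (hμi i) (h4 i j))
      · exact ((hx' i).sub (hx' j)).add (ha' j)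
      · exact ((hx' i).sub (hx' j)).add continuous_const
  · refine tendsto_finsetProd _ fun k _ => ContinuousAt.mul ?_ ?_
    · refine ContinuousAt.div (continuous_sf hf ?_ _).continuousAt
        (continuous_sf hf ?_ _).continuousAt (sf_ne_zero_of_le hμ (h5 k))
      · exact hv' k
      · exact (continuous_const.add hs).sub (hu' k)
    · refine tendsto_finsetProd _ fun i _ => ContinuousAt.div (continuous_sf hf ?_ _).continuousAt
        (continuous_sf hf ?_ _).continuousAt (sf_ne_zero_of_le (hμi i) (h6 i k))
      · exact (hx' i).add (hu' k)
      · exact (((hx' i).add continuous_const).add hs).sub (hv' k)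

/-- The terminating series depends continuously on a parameter where the denominators in the range
`|μ| ≤ N` do not vanish. -/
theorem continuousAt_Evw (hb : IsBracket f) {a x : ℂ → Fin m → ℂ} {s c₁ c₂ d₁ : ℂ → ℂ}
    {u v : ℂ → Fin n → ℂ} (ha : Continuous a) (hx : Continuous x) (hs : Continuous s)
    (hc₁ : Continuous c₁) (hc₂ : Continuous c₂) (hd₁ : Continuous d₁)
    (hu : Continuous u) (hv : Continuous v) (N : ℕ)
    (h1 : ∀ i j, i ≠ j → f (x 0 i - x 0 j) ≠ 0) (h2 : ∀ i, f (x 0 i + s 0) ≠ 0)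
    (h3 : ∀ j, sf f δ (δ + s 0 + x 0 j - a 0 j) N ≠ 0)
    (h4 : ∀ i j, sf f δ (x 0 i - x 0 j + δ) N ≠ 0)
    (h5 : ∀ k, sf f δ (δ + s 0 - (Fin.cons (c₁ 0) (Fin.cons (c₂ 0) (u 0)) : Fin (n + 2) → ℂ) k) N
      ≠ 0)
    (h6 : ∀ i k, sf f δ (x 0 i + δ + s 0
      - (Fin.cons (d₁ 0) (Fin.cons (-(N : ℂ) * δ) (v 0)) : Fin (n + 2) → ℂ) k) N ≠ 0) :
    ContinuousAt (fun ε => Evw f δ (a ε) (x ε) (s ε) (Fin.cons (c₁ ε) (Fin.cons (c₂ ε) (u ε)))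
      (Fin.cons (d₁ ε) (Fin.cons (-(N : ℂ) * δ) (v ε)))) 0 := by
  simp only [Evw_eq_sum hb]
  refine tendsto_finsetSum _ fun μ hμ => ?_
  exact continuousAt_Eterm hb.diff.continuous ha hx hs (hc₁.finCons (hc₂.finCons hu))
    (hd₁.finCons (continuous_const.finCons hv)) N h1 h2 h3 h4 h5 h6 μ
    (mem_simplex.mp hμ)

theorem continuousAt_dualFactor (hf : Continuous f) {x : ℂ → Fin m → ℂ} {c₁ d₁ : ℂ → ℂ}
    {v : ℂ → Fin n → ℂ} (a : Fin m → ℂ) (s c₂ : ℂ) (u : Fin n → ℂ) (hx : Continuous x)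
    (hc₁ : Continuous c₁) (hd₁ : Continuous d₁) (hv : Continuous v) (N : ℕ)
    (h1 : sf f δ (δ + s - c₁ 0) N ≠ 0) (h2 : sf f δ (δ + s - c₂) N ≠ 0)
    (h3 : ∀ i, sf f δ (δ + s + x 0 i - a i) N ≠ 0)
    (h4 : ∀ i, sf f δ (δ + s + x 0 i - d₁ 0) N ≠ 0)
    (h5 : ∀ k, sf f δ (δ + s - u k) N ≠ 0) (h6 : ∀ k, sf f δ (v 0 k - d₁ 0) N ≠ 0) :
    ContinuousAt (fun ε => dualFactor f δ N a (x ε) s (c₁ ε) c₂ (d₁ ε) u (v ε)) 0 := by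
  have hx' : ∀ i, Continuous fun ε => x ε i := fun i => (continuous_apply i).comp hx
  have hv' : ∀ i, Continuous fun ε => v ε i := fun i => (continuous_apply i).comp hv
  have key : ∀ {g : ℂ → ℂ}, Continuous g → ContinuousAt (fun ε => sf f δ (g ε) N) 0 :=
    fun hg => (continuous_sf hf hg N).continuousAt
  unfold dualFactor
  refine (ContinuousAt.mul ?_ ?_).mul ?_
  · exact ((key (by fun_prop)).mul (key (by fun_prop))).div
      ((key (by fun_prop)).mul (key (by fun_prop))) (mul_ne_zero h1 h2)
  · exact tendsto_finsetProd _ fun i _ => by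
      have := hx' i
      exact ((key (by fun_prop)).mul (key (by fun_prop))).div
        ((key (by fun_prop)).mul (key (by fun_prop))) (mul_ne_zero (h3 i) (h4 i))
  · exact tendsto_finsetProd _ fun k _ => by
      have := hv' k
      exact ((key (by fun_prop)).mul (key (by fun_prop))).div
        ((key (by fun_prop)).mul (key (by fun_prop))) (mul_ne_zero (h5 k) (h6 k))

/-- Along the line `x_i + (i+1)ε`, `v_k - (k+2)ε`, `d₁ - ε` the points that are generic modulo
`ℤδ` are dense: the differences in question are all differences of two entries of the list
`-s, x_1, …, x_m, d₁ - s, v_1 - s, …, v_n - s`, which move with pairwise different speeds. -/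
theorem dense_generic (hb : IsBracket f) (δ : ℂ) (x : Fin m → ℂ) (s d₁ : ℂ) (v : Fin n → ℂ) :
    Dense {ε : ℂ |
      (∀ i j, i ≠ j → ∀ r : ℤ,
        f ((x i + ((i : ℕ) + 1) * ε) - (x j + ((j : ℕ) + 1) * ε) + r * δ) ≠ 0) ∧
      (∀ i, ∀ r : ℤ, f ((x i + ((i : ℕ) + 1) * ε) + s + r * δ) ≠ 0) ∧
      (∀ r : ℤ, f ((d₁ - ε) + r * δ) ≠ 0) ∧
      (∀ k, ∀ r : ℤ, f ((v k - ((k : ℕ) + 2) * ε) + r * δ) ≠ 0) ∧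
      (∀ k k', k ≠ k' → ∀ r : ℤ,
        f ((v k - ((k : ℕ) + 2) * ε) - (v k' - ((k' : ℕ) + 2) * ε) + r * δ) ≠ 0) ∧
      (∀ k, ∀ r : ℤ, f ((v k - ((k : ℕ) + 2) * ε) - (d₁ - ε) + r * δ) ≠ 0) ∧
      (∀ i k, ∀ r : ℤ,
        f ((x i + ((i : ℕ) + 1) * ε) + s - (v k - ((k : ℕ) + 2) * ε) + r * δ) ≠ 0) ∧
      (∀ i, ∀ r : ℤ, f ((x i + ((i : ℕ) + 1) * ε) + s - (d₁ - ε) + r * δ) ≠ 0)} := by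
  let Z : Fin (m + 1) ⊕ Fin (n + 1) → ℂ :=
    Sum.elim (Fin.cons (-s) x) (Fin.cons (d₁ - s) fun k => v k - s)
  let e : Fin (m + 1) ⊕ Fin (n + 1) → ℤ :=
    Sum.elim (fun i => ((i : ℕ) : ℤ)) (fun k => -(((k : ℕ) : ℤ) + 1))
  have he : Function.Injective e := by
    rintro (i | i) (j | j) h <;> simp only [e, Sum.elim_inl, Sum.elim_inr] at h
    · exact congrArg Sum.inl (Fin.ext (by omega))
    · omega
    · omega
    · exact congrArg Sum.inr (Fin.ext (by omega))
  have hd := hb.dense_avoid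
    (ι := {pq : (Fin (m + 1) ⊕ Fin (n + 1)) × (Fin (m + 1) ⊕ Fin (n + 1)) // pq.1 ≠ pq.2} × ℤ)
    (fun p => Z p.1.1.1 - Z p.1.1.2 + p.2 * δ) (fun p => ((e p.1.1.1 - e p.1.1.2 : ℤ) : ℂ))
    (fun p => by
      rw [Int.cast_ne_zero, sub_ne_zero]
      exact fun h => p.1.2 (he h))
  refine hd.mono fun ε hε => ?_
  have key : ∀ p q, p ≠ q → ∀ r : ℤ,
      f (Z p - Z q + r * δ + ((e p - e q : ℤ) : ℂ) * ε) ≠ 0 := fun p q hpq r =>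
    hε (⟨(p, q), hpq⟩, r)
  refine ⟨fun i j hij r => ?_, fun i r => ?_, fun r => ?_, fun k r => ?_, fun k k' hk r => ?_,
    fun k r => ?_, fun i k r => ?_, fun i r => ?_⟩
  · convert key (.inl i.succ) (.inl j.succ) (by simpa using hij) r using 2
    simp [Z, e]; ring
  · convert key (.inl i.succ) (.inl 0) (by simp) r using 2
    simp [Z, e]; ring
  · convert key (.inr 0) (.inl 0) (by simp) r using 2
    simp [Z, e]; ring
  · convert key (.inr k.succ) (.inl 0) (by simp) r using 2
    simp [Z, e]; ring
  · convert key (.inr k.succ) (.inr k'.succ) (by simpa using hk) r using 2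
    simp [Z, e]; ring
  · convert key (.inr k.succ) (.inr 0) (by simp) r using 2
    simp [Z, e]; ring
  · convert key (.inl i.succ) (.inr k.succ) (by simp) r using 2
    simp [Z, e]; ring
  · convert key (.inl i.succ) (.inr 0) (by simp) r using 2
    simp [Z, e]; ring

theorem eventually_sf_ne_zero (hf : Continuous f) {g : ℂ → ℂ} (hg : Continuous g) {N : ℕ}
    (h : sf f δ (g 0) N ≠ 0) : ∀ᶠ ε in nhds (0 : ℂ), sf f δ (g ε) N ≠ 0 :=
  (continuous_sf hf hg N).continuousAt.eventually_ne h

/-- The duality transformation under the nonvanishing of the denominators only. -/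
theorem Evw_duality (hb : IsBracket f) (hδ : ∀ k : ℤ, k ≠ 0 → f ((k : ℂ) * δ) ≠ 0)
    (a x : Fin m → ℂ) (s c₁ c₂ d₁ t : ℂ) (u v : Fin n → ℂ) (N : ℕ)
    (ht : t = d₁ + -(N : ℂ) * δ - s - δ)
    (hbal : (∑ i, a i) + (c₁ + c₂ + d₁ + -(N : ℂ) * δ) + (∑ k, (u k + v k)) =
      ((n : ℂ) + 1) * δ + ((n : ℂ) + 2) * s)
    (hL1 : ∀ i j, i ≠ j → f (x i - x j) ≠ 0)
    (hL2 : ∀ i, f (x i + s) ≠ 0)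
    (hL3 : ∀ j, sf f δ (δ + s + x j - a j) N ≠ 0)
    (hL4 : ∀ i j, sf f δ (x i - x j + δ) N ≠ 0)
    (hL5 : ∀ k, sf f δ (δ + s - (Fin.cons c₁ (Fin.cons c₂ u) : Fin (n + 2) → ℂ) k) N ≠ 0)
    (hL6 : ∀ i k, sf f δ (x i + δ + s
      - (Fin.cons d₁ (Fin.cons (-(N : ℂ) * δ) v) : Fin (n + 2) → ℂ) k) N ≠ 0)
    (hR1 : ∀ k k', k ≠ k' → f ((δ + s - v k) - (δ + s - v k')) ≠ 0)
    (hR2 : ∀ k, f ((δ + s - v k) + t) ≠ 0)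
    (hR3 : ∀ k, sf f δ (δ + t + (δ + s - v k) - (δ + s - u k - v k)) N ≠ 0)
    (hR4 : ∀ k k', sf f δ ((δ + s - v k) - (δ + s - v k') + δ) N ≠ 0)
    (hR5 : ∀ i, sf f δ (δ + t
      - (Fin.cons (-c₁) (Fin.cons (-c₂) fun i => x i - a i) : Fin (m + 2) → ℂ) i) N ≠ 0)
    (hR6 : ∀ k i, sf f δ ((δ + s - v k) + δ + t - (Fin.cons d₁ (Fin.cons (-(N : ℂ) * δ)
      fun i => d₁ + -(N : ℂ) * δ - s - x i) : Fin (m + 2) → ℂ) i) N ≠ 0)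
    (hpre : ∀ k, sf f δ (v k - d₁) N ≠ 0) :
    Evw f δ a x s (Fin.cons c₁ (Fin.cons c₂ u)) (Fin.cons d₁ (Fin.cons (-(N : ℂ) * δ) v))
      = dualFactor f δ N a x s c₁ c₂ d₁ u v
        * Evw f δ (fun k => δ + s - u k - v k) (fun k => δ + s - v k) t
            (Fin.cons (-c₁) (Fin.cons (-c₂) fun i => x i - a i))
            (Fin.cons d₁ (Fin.cons (-(N : ℂ) * δ) fun i => d₁ + -(N : ℂ) * δ - s - x i)) := by
  have hf : Continuous f := hb.diff.continuous
  -- The line of parameters through the given point; `c₁` moves so as to keep the balancing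
  -- condition.
  obtain ⟨X, hX⟩ : ∃ X : ℂ → Fin m → ℂ, X = fun ε i => x i + ((i : ℕ) + 1) * ε := ⟨_, rfl⟩
  obtain ⟨V, hV⟩ : ∃ V : ℂ → Fin n → ℂ, V = fun ε k => v k - ((k : ℕ) + 2) * ε := ⟨_, rfl⟩
  obtain ⟨D, hD⟩ : ∃ D : ℂ → ℂ, D = fun ε => d₁ - ε := ⟨_, rfl⟩
  obtain ⟨C, hC⟩ : ∃ C : ℂ → ℂ, C = fun ε => c₁ + (1 + ∑ k : Fin n, ((k : ℕ) + 2 : ℂ)) * ε :=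
    ⟨_, rfl⟩
  obtain ⟨T, hT⟩ : ∃ T : ℂ → ℂ, T = fun ε => D ε + -(N : ℂ) * δ - s - δ := ⟨_, rfl⟩
  have hXc : Continuous X := by subst hX; fun_prop
  have hVc : Continuous V := by subst hV; fun_prop
  have hDc : Continuous D := by subst hD; fun_prop
  have hCc : Continuous C := by subst hC; fun_prop
  have hTc : Continuous T := by subst hT; fun_prop
  have hXi : ∀ i, Continuous fun ε => X ε i := fun i => (continuous_apply i).comp hXc
  have hVk : ∀ k, Continuous fun ε => V ε k := fun k => (continuous_apply k).comp hVc
  have hX0 : X 0 = x := by simp [hX]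
  have hV0 : V 0 = v := by simp [hV]
  have hD0 : D 0 = d₁ := by simp [hD]
  have hC0 : C 0 = c₁ := by simp [hC]
  have hT0 : T 0 = t := by rw [hT, ht, ← hD0]
  -- It suffices to compare two functions of `ε` continuous at `0`.
  have hLc : ContinuousAt (fun ε => Evw f δ a (X ε) s (Fin.cons (C ε) (Fin.cons c₂ u))
      (Fin.cons (D ε) (Fin.cons (-(N : ℂ) * δ) (V ε)))) 0 := by
    refine continuousAt_Evw hb (a := fun _ => a) (s := fun _ => s) (c₂ := fun _ => c₂)
      (u := fun _ => u) continuous_const hXc continuous_const hCc continuous_const hDc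
      continuous_const hVc N ?_ ?_ ?_ ?_ ?_ ?_ <;> simp only [hX0, hV0, hD0, hC0] <;> assumption
  have hRc : ContinuousAt (fun ε => dualFactor f δ N a (X ε) s (C ε) c₂ (D ε) u (V ε)
        * Evw f δ (fun k => δ + s - u k - V ε k) (fun k => δ + s - V ε k) (T ε)
            (Fin.cons (-C ε) (Fin.cons (-c₂) fun i => X ε i - a i))
            (Fin.cons (D ε) (Fin.cons (-(N : ℂ) * δ)
              fun i => D ε + -(N : ℂ) * δ - s - X ε i))) 0 := by
    refine ContinuousAt.mul ?_ ?_
    · refine continuousAt_dualFactor hf a s c₂ u hXc hCc hDc hVc N ?_ ?_ ?_ ?_ ?_ ?_ <;>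
        try simp only [hX0, hV0, hD0, hC0]
      · exact hL5 0
      · exact hL5 1
      · exact hL3
      · intro i
        convert hL6 i 0 using 2
        simp only [Fin.cons_zero]
        ring
      · exact fun k => hL5 k.succ.succ
      · exact hpre
    · refine continuousAt_Evw hb (a := fun ε k => δ + s - u k - V ε k)
        (x := fun ε k => δ + s - V ε k) (s := T) (c₁ := fun ε => -C ε) (c₂ := fun _ => -c₂)
        (d₁ := D) (u := fun ε i => X ε i - a i) (v := fun ε i => D ε + -(N : ℂ) * δ - s - X ε i)
        (by fun_prop) (by fun_prop) hTc (by fun_prop) (by fun_prop) hDc (by fun_prop)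
        (by fun_prop) N ?_ ?_ ?_ ?_ ?_ ?_ <;>
        simp only [hX0, hV0, hD0, hC0, hT0] <;> assumption
  have hbalε : ∀ ε, (∑ i, a i) + (C ε + c₂ + D ε + -(N : ℂ) * δ) + (∑ k, (u k + V ε k)) =
      ((n : ℂ) + 1) * δ + ((n : ℂ) + 2) * s := by
    intro ε
    rw [← hbal, hC, hD, hV]
    simp only [Finset.sum_add_distrib, Finset.sum_sub_distrib, ← Finset.sum_mul]
    ring
  have hev : ∀ᶠ ε in nhds (0 : ℂ),
      (∀ j, sf f δ (δ + s + X ε j - a j) N ≠ 0) ∧ sf f δ (δ + s - C ε) N ≠ 0 ∧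
      (∀ k, sf f δ (δ + T ε + (δ + s - V ε k) - (δ + s - u k - V ε k)) N ≠ 0) ∧
      sf f δ (δ + T ε - -C ε) N ≠ 0 ∧ sf f δ (δ + T ε - -c₂) N ≠ 0 ∧
      (∀ i, sf f δ (δ + T ε - (X ε i - a i)) N ≠ 0) := by
    refine (Filter.eventually_all.mpr fun j => ?_).and (Filter.Eventually.and ?_
      ((Filter.eventually_all.mpr fun k => ?_).and (Filter.Eventually.and ?_
      (Filter.Eventually.and ?_ (Filter.eventually_all.mpr fun i => ?_)))))
    · have := hXi j
      exact eventually_sf_ne_zero hf (g := fun ε => δ + s + X ε j - a j) (by fun_prop)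
        (by simpa only [hX0] using hL3 j)
    · exact eventually_sf_ne_zero hf (g := fun ε => δ + s - C ε) (by fun_prop)
        (by simp only [hC0]; exact hL5 0)
    · have := hVk k
      exact eventually_sf_ne_zero hf
        (g := fun ε => δ + T ε + (δ + s - V ε k) - (δ + s - u k - V ε k)) (by fun_prop)
        (by simpa only [hT0, hV0] using hR3 k)
    · exact eventually_sf_ne_zero hf (g := fun ε => δ + T ε - -C ε) (by fun_prop)
        (by simp only [hT0, hC0]; exact hR5 0)
    · exact eventually_sf_ne_zero hf (g := fun ε => δ + T ε - -c₂) (by fun_prop)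
        (by simp only [hT0]; exact hR5 1)
    · have := hXi i
      exact eventually_sf_ne_zero hf (g := fun ε => δ + T ε - (X ε i - a i)) (by fun_prop)
        (by simp only [hT0, hX0]; exact hR5 i.succ.succ)
  have hfreq := (mem_closure_iff_frequently.mp (dense_generic hb δ x s d₁ v 0)).and_eventually hev
  have hlim := tendsto_nhds_unique_of_frequently_eq hLc hRc (hfreq.mono ?_)
  · simpa only [hX0, hV0, hD0, hC0, hT0] using hlim
  · rintro ε ⟨⟨g1, g2, g3, g4, g5, g6, g7, g8⟩, e1, e2, e3, e4, e5, e6⟩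
    refine Evw_duality_generic hb hδ a (X ε) s (C ε) c₂ (D ε) (T ε) u (V ε) N (by rw [hT])
      (hbalε ε) ?_ ?_ ?_ ?_ ?_ ?_ ?_ ?_ e1 e2 (hL5 1) (fun k => hL5 k.succ.succ) e3 e4 e5 e6 <;>
      simp only [hX, hV, hD] <;> assumption

end Limit

/-- Duality transformation (3.11)/(3.12) between `E^{m,n+2}` and `E^{n,m+2}`. -/
theorem E_duality_transformation
    (f : ℂ → ℂ) (hf : f ≠ 0) (hodd : ∀ t : ℂ, f (-t) = -f t) (hdiff : Differentiable ℂ f)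
    (hRiem : ∀ x y u v : ℂ,
      f (x + y) * f (x - y) * f (u + v) * f (u - v) =
        f (x + u) * f (x - u) * f (y + v) * f (y - v)
          - f (x + v) * f (x - v) * f (y + u) * f (y - u))
    (δ : ℂ) (hδ : ∀ k : ℤ, k ≠ 0 → f ((k : ℂ) * δ) ≠ 0)
    (m n N : ℕ) (a x : Fin m → ℂ) (s c1 c2 d1 d2 : ℂ) (u v : Fin n → ℂ)
    (hd2 : d2 = -(N : ℂ) * δ)
    (hbal : (∑ i, a i) + (c1 + c2 + d1 + d2) + (∑ k, (u k + v k)) =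
      ((n : ℂ) + 1) * δ + ((n : ℂ) + 2) * s)
    (t : ℂ) (ht : t = d1 + d2 - s - δ)
    (bb yy : Fin n → ℂ) (hbb : ∀ k, bb k = δ + s - u k - v k)
    (hyy : ∀ k, yy k = δ + s - v k)
    (zz ww : Fin m → ℂ) (hzz : ∀ i, zz i = x i - a i)
    (hww : ∀ i, ww i = d1 + d2 - s - x i)
    (hL1 : ∀ i j, i ≠ j → f (x i - x j) ≠ 0)
    (hL2 : ∀ i, f (x i + s) ≠ 0)
    (hL3 : ∀ (j : Fin m) (l : ℕ), l < N → f (δ + s + x j - a j + (l : ℂ) * δ) ≠ 0)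
    (hL4 : ∀ (i j : Fin m) (l : ℕ), l < N → f (x i - x j + δ + (l : ℂ) * δ) ≠ 0)
    (hL5 : ∀ (k : Fin (n + 2)) (l : ℕ), l < N →
      f (δ + s - (Fin.cons c1 (Fin.cons c2 u) : Fin (n + 2) → ℂ) k + (l : ℂ) * δ) ≠ 0)
    (hL6 : ∀ (i : Fin m) (k : Fin (n + 2)) (l : ℕ), l < N →
      f (x i + δ + s - (Fin.cons d1 (Fin.cons d2 v) : Fin (n + 2) → ℂ) k + (l : ℂ) * δ) ≠ 0)
    (hR1 : ∀ k k', k ≠ k' → f (yy k - yy k') ≠ 0)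
    (hR2 : ∀ k, f (yy k + t) ≠ 0)
    (hR3 : ∀ (k : Fin n) (l : ℕ), l < N → f (δ + t + yy k - bb k + (l : ℂ) * δ) ≠ 0)
    (hR4 : ∀ (k k' : Fin n) (l : ℕ), l < N → f (yy k - yy k' + δ + (l : ℂ) * δ) ≠ 0)
    (hR5 : ∀ (i : Fin (m + 2)) (l : ℕ), l < N →
      f (δ + t - (Fin.cons (-c1) (Fin.cons (-c2) zz) : Fin (m + 2) → ℂ) i + (l : ℂ) * δ) ≠ 0)
    (hR6 : ∀ (k : Fin n) (i : Fin (m + 2)) (l : ℕ), l < N →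
      f (yy k + δ + t - (Fin.cons d1 (Fin.cons d2 ww) : Fin (m + 2) → ℂ) i + (l : ℂ) * δ) ≠ 0)
    (hpre : ∀ (k : Fin n) (l : ℕ), l < N → f (v k - d1 + (l : ℂ) * δ) ≠ 0) :
    Evw f δ a x s (Fin.cons c1 (Fin.cons c2 u)) (Fin.cons d1 (Fin.cons d2 v)) =
      (sf f δ (δ + s - c1 - d1) N * sf f δ (δ + s - c2 - d1) N
          / (sf f δ (δ + s - c1) N * sf f δ (δ + s - c2) N))
        * (∏ i, sf f δ (δ + s + x i) N * sf f δ (δ + s + x i - a i - d1) N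
            / (sf f δ (δ + s + x i - a i) N * sf f δ (δ + s + x i - d1) N))
        * (∏ k, sf f δ (v k) N * sf f δ (δ + s - u k - d1) N
            / (sf f δ (δ + s - u k) N * sf f δ (v k - d1) N))
        * Evw f δ bb yy t (Fin.cons (-c1) (Fin.cons (-c2) zz))
            (Fin.cons d1 (Fin.cons d2 ww)) := by
  subst hd2 ht
  obtain rfl : bb = fun k => δ + s - u k - v k := funext hbb
  obtain rfl : yy = fun k => δ + s - v k := funext hyy
  obtain rfl : zz = fun i => x i - a i := funext hzz
  obtain rfl : ww = fun i => d1 + -(N : ℂ) * δ - s - x i := funext hww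
  exact Evw_duality ⟨hf, hodd, hdiff, hRiem⟩ hδ a x s c1 c2 d1 _ u v N rfl hbal hL1 hL2
    (fun j => sf_ne_zero (hL3 j)) (fun i j => sf_ne_zero (hL4 i j)) (fun k => sf_ne_zero (hL5 k))
    (fun i k => sf_ne_zero (hL6 i k)) hR1 hR2 (fun k => sf_ne_zero (hR3 k))
    (fun k k' => sf_ne_zero (hR4 k k')) (fun i => sf_ne_zero (hR5 i))
    (fun k i => sf_ne_zero (hR6 k i)) (fun k => sf_ne_zero (hpre k))
end
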